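/- Let b ≥ 2 be an integer. For every ε > 0 and m ∈ ℤ₊ there exist δ = δ(ε,m) > 0 and K = K(ε,δ,m) such that for every k ≥ K, every n ∈ ℕ, and all Borel probability measures τ, θ on ℝ: if (1) the diameters of the supports of τ and θ are both at most b^{−n}, (2) τ is (1−ε, ε/2, m)-entropy porous from scale n to n+k, and (3) (1/k) H(θ, L_{n+k}) > ε, then (1/k) H(θ∗τ, L_{n+k}) ≥ (1/k) H(τ, L_{n+k}) + δ, where θ∗τ denotes the convolution of θ and τ, i.e. the pushforward of θ×τ under (u,v) ↦ u+v. -/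

import Mathlib

/-!
Let `X` and `Y` be the indices of the `b`-adic cells of level `n + k` in which independent variables
of laws `θ` and `τ` fall. Up to `log 2`, which is negligible against `δ k`, the entropy of `θ ∗ τ` at
level `n + k` is the Shannon entropy of the integer-valued variable `X + Y`, and since the supports
have diameter at most `b⁻ⁿ` both variables live on finite sets. The claim becomes
`H(X + Y) ≥ H(Y) + δ k` (`discrete_growth`).

By the Kaimanovich–Vershik inequality (`Hd_iterate`), a consequence of the submodularity of
entropy, adding `N` independent copies of `X` to `Y` raises the entropy at most `N` times as much
as adding a single one. Hence it is enough to gain a multiple of `k` for `Z = Y + X₁ + ⋯ + X_N`, with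
`N = b ^ (2 * M)` and `M` large but independent of `k`. The entropies of `Z` and `Y` are compared one
block of `M` levels at a time.

* On every block, `Z` has at least as much entropy as `Y` up to a constant (`bad_block`), as one
  sees by conditioning on the `X_j`.
* Suppose `X` has entropy at least a fixed fraction of the maximum over the `s` levels just finer
  than the block. Then `Z` has entropy `M log b - O(1)` over the block (`good_block`). Conditionally
  on the cells of the `X_j` at the fine end of the block, `Z` is spread over about `b ^ M` cells:
  two copies of `X` sharing a cell are far apart with probability bounded below (`sep`), so that by
  the Littlewood–Offord inequality (`lo_prob`) the sum of `N` differences of such pairs rarely is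
  small. At the coarse end the same conditioning determines `Z` up to bounded entropy (`coarse`),
  since the fluctuations are of order `√N = b ^ M` cells.

As `θ` has entropy more than `ε k`, a positive proportion of the blocks are of the second kind. By
porosity the components of `τ` have normalized entropy less than `1 - ε / 2` at most levels, so most
of those blocks carry at most about `(1 - ε / 2) M log b` of the entropy of `Y`, and `Z` gains about
`ε M log b / 2` on each. For `M` large this dominates the bounded losses; the summation over blocks is
`seq_lemma`.
-/

open MeasureTheory Set Filter
open scoped ENNReal NNReal Topology

namespace Skew

noncomputable section

variable (b : ℕ) (γ : ℝ) (φ : ℝ → ℝ)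

/-- `j₁ + j₂ b + ⋯ + jₙ b^{n-1}`, the integer part determined by the first `n`
digits of the sequence `j`. -/
def sval (j : ℕ → Fin b) (n : ℕ) : ℕ := ∑ k ∈ Finset.range n, (j k).val * b ^ k

/-- `S(x,j) = Σ_{n≥1} γ^{n-1} φ((x + j₁ + j₂ b + ⋯ + jₙ b^{n-1})/bⁿ)` for an infinite
sequence `j ∈ Σ = Λ^{ℤ₊}`. -/
def S (x : ℝ) (j : ℕ → Fin b) : ℝ :=
  ∑' n : ℕ, γ ^ n * φ ((x + sval b j (n + 1)) / (b : ℝ) ^ (n + 1))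

/-- value of a finite word: first letter has weight `b^0`. -/
def lval : List (Fin b) → ℕ
  | [] => 0
  | a :: w => a.val + b * lval w

/-- `S(x,w)` for a finite word `w ∈ Λ^#`. -/
def Sfin (x : ℝ) (w : List (Fin b)) : ℝ :=
  ∑ n ∈ Finset.range w.length, γ ^ n * φ ((x + lval b (w.take (n + 1))) / (b : ℝ) ^ (n + 1))

/-- concatenation of a finite word with an infinite sequence. -/
def cat (w : List (Fin b)) (j : ℕ → Fin b) : ℕ → Fin b :=
  fun n => if h : n < w.length then w.get ⟨n, h⟩ else j (n - w.length)

/-- `w(x) = (x + w₁ + w₂ b + ⋯ + wₙ b^{n-1})/bⁿ`. -/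
def pt (w : List (Fin b)) (x : ℝ) : ℝ := (x + lval b w) / (b : ℝ) ^ w.length

/-- the `b`-adic interval `I_w = [w(0), w(0) + b^{-|w|})`. -/
def Iword (w : List (Fin b)) : Set ℝ :=
  Ico (pt b w 0) (pt b w 0 + ((b : ℝ) ^ w.length)⁻¹)

/-- value of a word given as a function `Fin n → Fin b`. -/
def fval {n : ℕ} (w : Fin n → Fin b) : ℕ := ∑ k : Fin n, (w k).val * b ^ (k : ℕ)

/-- `w(x)` for a word given as a function `Fin n → Fin b`. -/
def fpt {n : ℕ} (w : Fin n → Fin b) (x : ℝ) : ℝ := (x + fval b w) / (b : ℝ) ^ n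

/-- `ν` is the Bernoulli product measure `ν^{ℤ₊}` of uniform measures on `Λ = Fin b`:
a probability measure giving each cylinder of length `n` measure `b^{-n}`.  (These
conditions determine the measure uniquely.) -/
def IsBernoulli (ν : Measure (ℕ → Fin b)) : Prop :=
  IsProbabilityMeasure ν ∧
    ∀ (n : ℕ) (w : Fin n → Fin b), ν {j | ∀ k : Fin n, j k = w k} = ((b : ℝ≥0∞) ^ n)⁻¹

/-- the measure `m_x`, pushforward of `ν^{ℤ₊}` under `j ↦ S(x,j)`. -/
def mMeas (ν : Measure (ℕ → Fin b)) (x : ℝ) : Measure ℝ := ν.map (S b γ φ x)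

/-- the SRB measure `ω`: pushforward of `Leb|_{[0,1)} × ν^{ℤ₊}` under `(x,j) ↦ (x, S(x,j))`. -/
def srb (ν : Measure (ℕ → Fin b)) : Measure (ℝ × ℝ) :=
  ((volume.restrict (Ico (0 : ℝ) 1)).prod ν).map fun p => (p.1, S b γ φ p.1 p.2)

/-- the attractor `F^φ_{b,γ}`, closure of `{(x, S(x,j)) : x ∈ [0,1), j ∈ Σ}`. -/
def attractor : Set (ℝ × ℝ) :=
  closure {p | ∃ x ∈ Ico (0 : ℝ) 1, ∃ j : ℕ → Fin b, p = (x, S b γ φ x j)}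

/-- condition (H). -/
def CondH : Prop :=
  ∀ i j : ℕ → Fin b, i ≠ j → ∃ x ∈ Icc (0 : ℝ) 1, S b γ φ x i ≠ S b γ φ x j

/-- condition (H*). -/
def CondHstar : Prop :=
  ∀ i j : ℕ → Fin b, ∀ x ∈ Icc (0 : ℝ) 1, S b γ φ x i = S b γ φ x j

/-- a measure is exact dimensional with dimension `β`. -/
def IsExactDim {X : Type*} [MetricSpace X] [MeasurableSpace X] (μ : Measure X) (β : ℝ) : Prop :=
  ∀ᵐ z ∂μ, Tendsto (fun r : ℝ => Real.log (μ (Metric.closedBall z r)).toReal / Real.log r)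
    (nhdsWithin 0 (Ioi 0)) (nhds β)

/-- the `b`-adic interval of level `n` with index `j`. -/
def badicI (n : ℕ) (j : ℤ) : Set ℝ := Ico ((j : ℝ) / (b : ℝ) ^ n) ((j + 1 : ℝ) / (b : ℝ) ^ n)

/-- the entropy `H(μ, L_n)` (in base-`b` logarithm). -/
def entropy (μ : Measure ℝ) (n : ℕ) : ℝ :=
  (∑' j : ℤ, Real.negMulLog (μ (badicI b n j)).toReal) / Real.log b

/-- the `b`-adic interval of level `n` containing `x`. -/
def badicAt (n : ℕ) (x : ℝ) : Set ℝ := badicI b n ⌊x * (b : ℝ) ^ n⌋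

/-- the component measure `μ_{x,n} = μ(· | L_n(x))`. -/
def component (μ : Measure ℝ) (n : ℕ) (x : ℝ) : Measure ℝ :=
  (μ (badicAt b n x))⁻¹ • μ.restrict (badicAt b n x)

/-- `μ` is `(h,δ,m)`-entropy porous from scale `n₁` to `n₂`. -/
def EntPorous (μ : Measure ℝ) (h δ : ℝ) (m n₁ n₂ : ℕ) : Prop :=
  (1 / (n₂ - n₁ + 1 : ℝ)) *
    ∑ i ∈ Finset.Icc n₁ n₂,
      (μ {x | (1 / m : ℝ) * entropy b (component b μ i x) (i + m) < h + δ}).toReal > 1 - δ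

/-- the (topological) support of a measure on `ℝ`. -/
def msupport (μ : Measure ℝ) : Set ℝ := {x | ∀ r : ℝ, 0 < r → 0 < μ (Metric.ball x r)}

/-- convolution of two measures on `ℝ`: pushforward of `θ × τ` under `(u,v) ↦ u + v`. -/
def mconv (θ τ : Measure ℝ) : Measure ℝ := (θ.prod τ).map fun p => p.1 + p.2

/-! ### Shannon entropy on finite probability spaces -/

/-- Probability weights on a finite type. -/
structure IsPW {Ω : Type*} [Fintype Ω] (p : Ω → ℝ) : Prop where
  nonneg : ∀ ω, 0 ≤ p ω
  sum_one : ∑ ω, p ω = 1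

open Classical in
/-- The probability, under the weights `p`, that the observable `f` takes the value `f ω`. -/
def pr {Ω α : Type*} [Fintype Ω] (p : Ω → ℝ) (f : Ω → α) (ω : Ω) : ℝ :=
  ∑ ω', if f ω' = f ω then p ω' else 0

/-- Shannon entropy, in nats, of the observable `f` under the weights `p`, written as the mean of
`-log (pr p f ω)`. Points of weight zero contribute nothing, so the value `Real.log 0 = 0` is
harmless. -/
def Hd {Ω α : Type*} [Fintype Ω] (p : Ω → ℝ) (f : Ω → α) : ℝ :=
  ∑ ω, p ω * (-Real.log (pr p f ω))

section lib
variable {Ω α β η : Type*} [Fintype Ω] {p : Ω → ℝ}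

lemma pr_nonneg (hp : IsPW p) (f : Ω → α) (ω : Ω) : 0 ≤ pr p f ω :=
  Finset.sum_nonneg fun a _ => by split_ifs <;> simp [hp.nonneg]

lemma le_pr (hp : IsPW p) (f : Ω → α) (ω : Ω) : p ω ≤ pr p f ω := by
  classical
  have := Finset.single_le_sum (f := fun a => if f a = f ω then p a else 0)
    (fun a _ => by split_ifs <;> simp [hp.nonneg]) (Finset.mem_univ ω)
  simpa [pr] using this

lemma pr_pos (hp : IsPW p) (f : Ω → α) {ω : Ω} (h : 0 < p ω) : 0 < pr p f ω :=
  h.trans_le (le_pr hp f ω)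

lemma pr_anti (hp : IsPW p) {f : Ω → α} {g : Ω → β} (h : ∀ a c, g a = g c → f a = f c) (ω : Ω) :
    pr p g ω ≤ pr p f ω := by
  classical
  refine Finset.sum_le_sum fun a _ => ?_
  by_cases h1 : g a = g ω
  · simp [h1, h _ _ h1]
  · simp only [h1, if_false]; split_ifs <;> simp [hp.nonneg]

lemma pr_le_one (hp : IsPW p) (f : Ω → α) (ω : Ω) : pr p f ω ≤ 1 := by
  classical
  rw [← hp.sum_one]
  exact Finset.sum_le_sum fun a _ => by split_ifs <;> simp [hp.nonneg]

lemma pr_eq_of_eq {f : Ω → α} {a c : Ω} (h : f a = f c) : pr p f a = pr p f c := by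
  unfold pr; rw [h]

lemma sum_ite_eq_pr (f : Ω → α) (ω : Ω) [∀ a, Decidable (f a = f ω)] :
    (∑ a, if f a = f ω then p a else 0) = pr p f ω := by
  unfold pr
  exact Finset.sum_congr rfl fun _ _ => by congr

lemma pr_congr {f : Ω → α} {g : Ω → β} (h : ∀ a c, g a = g c ↔ f a = f c) (ω : Ω) :
    pr p g ω = pr p f ω := by
  classical
  simp [pr, h]

lemma Hd_mono (hp : IsPW p) {f : Ω → α} {g : Ω → β} (h : ∀ a c, g a = g c → f a = f c) :
    Hd p f ≤ Hd p g := by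
  refine Finset.sum_le_sum fun a _ => ?_
  rcases (hp.nonneg a).eq_or_lt with h0 | h0
  · simp [← h0]
  · exact mul_le_mul_of_nonneg_left
      (neg_le_neg (Real.log_le_log (pr_pos hp g h0) (pr_anti hp h a))) h0.le

lemma Hd_congr {f : Ω → α} {g : Ω → β} (h : ∀ a c, g a = g c ↔ f a = f c) :
    Hd p g = Hd p f := by
  simp [Hd, pr_congr h]

lemma Hd_nonneg (hp : IsPW p) (f : Ω → α) : 0 ≤ Hd p f :=
  Finset.sum_nonneg fun a _ => mul_nonneg (hp.nonneg a)
    (neg_nonneg.2 (Real.log_nonpos (pr_nonneg hp f a) (pr_le_one hp f a)))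

/-- The points of one level set, weighted by their conditional probability, have total mass at
most one. It is one unless the level set is null, where `0 / 0 = 0` makes the sum vanish. -/
lemma class_sum_le (f : Ω → α) (v : α) [∀ ω, Decidable (f ω = v)] :
    ∑ ω, (if f ω = v then p ω / pr p f ω else 0) ≤ 1 := by
  classical
  by_cases h : ∃ ω, f ω = v
  · obtain ⟨ω0, rfl⟩ := h
    have : ∀ ω, (if f ω = f ω0 then p ω / pr p f ω else 0)
        = (if f ω = f ω0 then p ω else 0) / pr p f ω0 := by
      intro ω
      split_ifs with h
      · rw [pr_eq_of_eq h]
      · simp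
    simp only [this, ← Finset.sum_div]
    rw [sum_ite_eq_pr]
    exact div_self_le_one _
  · push Not at h
    simp [h]

/-- Jensen's inequality for the logarithm, in the form `E x ≤ C → E (log x) ≤ log C`. -/
lemma gibbs (hp : IsPW p) (x : Ω → ℝ) (hx : ∀ ω, 0 < p ω → 0 < x ω) (C : ℝ)
    (h : ∑ ω, p ω * x ω ≤ C) (hC : 0 < C) : ∑ ω, p ω * Real.log (x ω) ≤ Real.log C := by
  have h1 : ∀ ω, p ω * Real.log (x ω) ≤ p ω * (x ω / C - 1 + Real.log C) := by
    intro ω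
    rcases (hp.nonneg ω).eq_or_lt with h0 | h0
    · simp [← h0]
    · refine mul_le_mul_of_nonneg_left ?_ h0.le
      have := Real.log_le_sub_one_of_pos (div_pos (hx ω h0) hC)
      rw [Real.log_div (hx ω h0).ne' hC.ne'] at this
      linarith
  refine (Finset.sum_le_sum fun ω _ => h1 ω).trans ?_
  have : ∑ ω, p ω * (x ω / C - 1 + Real.log C) = (∑ ω, p ω * x ω) / C - 1 + Real.log C := by
    have e : ∀ ω, p ω * (x ω / C - 1 + Real.log C)
      = (p ω * x ω) / C + p ω * (-1 + Real.log C) := fun ω => by ring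
    simp only [e, Finset.sum_add_distrib, ← Finset.sum_mul, ← Finset.sum_div, hp.sum_one]
    ring
  rw [this]
  have : (∑ ω, p ω * x ω) / C ≤ 1 := (div_le_one hC).2 h
  linarith

/-- Strong subadditivity `H(f, g, h) + H(h) ≤ H(f, h) + H(g, h)`. -/
lemma Hd_submod (hp : IsPW p) (f : Ω → α) (g : Ω → β) (h : Ω → η) :
    Hd p (fun ω => (f ω, g ω, h ω)) + Hd p h
      ≤ Hd p (fun ω => (f ω, h ω)) + Hd p (fun ω => (g ω, h ω)) := by
  classical
  set F := fun ω => (f ω, h ω)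
  set G := fun ω => (g ω, h ω)
  set T := fun ω => (f ω, g ω, h ω)
  have key : ∑ ω, p ω * (pr p F ω * pr p G ω / (pr p T ω * pr p h ω)) ≤ 1 := by
    calc ∑ ω, p ω * (pr p F ω * pr p G ω / (pr p T ω * pr p h ω))
        = ∑ ω, ∑ a, ∑ c, (if F a = F ω then p a else 0) * (if G c = G ω then p c else 0)
            * (p ω / (pr p T ω * pr p h ω)) := by
          refine Finset.sum_congr rfl fun ω _ => ?_
          simp only [← Finset.sum_mul, ← Finset.mul_sum]
          rw [sum_ite_eq_pr, sum_ite_eq_pr]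
          ring
      _ = ∑ a, ∑ c, ∑ ω, (if F a = F ω then p a else 0) * (if G c = G ω then p c else 0)
            * (p ω / (pr p T ω * pr p h ω)) := by
          rw [Finset.sum_comm]
          exact Finset.sum_congr rfl fun a _ => Finset.sum_comm
      _ ≤ ∑ a, ∑ c, (if h c = h a then p c else 0) * (p a / pr p h a) := by
          refine Finset.sum_le_sum fun a _ => Finset.sum_le_sum fun c _ => ?_
          by_cases hac : h c = h a
          · have e : ∀ ω, (if F a = F ω then p a else 0) * (if G c = G ω then p c else 0)
                * (p ω / (pr p T ω * pr p h ω))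
                = (if T ω = (f a, g c, h a) then p ω / pr p T ω else 0)
                  * (p c * (p a / pr p h a)) := by
              intro ω
              by_cases hT : T ω = (f a, g c, h a)
              · have h1 : f ω = f a := congrArg (·.1) hT
                have h2 : g ω = g c := congrArg (·.2.1) hT
                have h3 : h ω = h a := congrArg (·.2.2) hT
                have hF : F a = F ω := by simp [F, h1, h3]
                have hG : G c = G ω := by simp [G, h2, h3, hac]
                rw [if_pos hF, if_pos hG, if_pos hT, pr_eq_of_eq h3]
                field_simp
              · rw [if_neg hT]
                by_cases hF : F a = F ω
                · by_cases hG : G c = G ω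
                  · exfalso; apply hT
                    have h1 : f a = f ω := congrArg (·.1) hF
                    have h2 : g c = g ω := congrArg (·.1) hG
                    have h3 : h a = h ω := congrArg (·.2) hF
                    simp [T, h1, h2, h3]
                  · simp [hG]
                · simp [hF]
            rw [Finset.sum_congr rfl fun ω _ => e ω, ← Finset.sum_mul, if_pos hac]
            refine (mul_le_mul_of_nonneg_right (class_sum_le T _) ?_).trans (by rw [one_mul])
            exact mul_nonneg (hp.nonneg _) (div_nonneg (hp.nonneg _) (pr_nonneg hp _ _))
          · rw [if_neg hac, zero_mul]
            refine (Finset.sum_eq_zero fun ω _ => ?_).le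
            by_cases hF : F a = F ω
            · by_cases hG : G c = G ω
              · exfalso; apply hac
                have h3 : h a = h ω := congrArg (·.2) hF
                have h4 : h c = h ω := congrArg (·.2) hG
                rw [h3, h4]
              · simp [hG]
            · simp [hF]
      _ ≤ ∑ a, p a := by
          refine Finset.sum_le_sum fun a _ => ?_
          rw [← Finset.sum_mul]
          change pr p h a * (p a / pr p h a) ≤ p a
          rw [mul_div_left_comm]
          exact mul_le_of_le_one_right (hp.nonneg a) (div_self_le_one _)
      _ = 1 := hp.sum_one
  have := gibbs hp _ (fun ω h0 => div_pos (mul_pos (pr_pos hp F h0) (pr_pos hp G h0))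
    (mul_pos (pr_pos hp T h0) (pr_pos hp h h0))) 1 key one_pos
  rw [Real.log_one] at this
  have e : ∑ ω, p ω * Real.log (pr p F ω * pr p G ω / (pr p T ω * pr p h ω))
      = Hd p T + Hd p h - Hd p F - Hd p G := by
    simp only [Hd, ← Finset.sum_add_distrib, ← Finset.sum_sub_distrib]
    refine Finset.sum_congr rfl fun ω _ => ?_
    rcases (hp.nonneg ω).eq_or_lt with h0 | h0
    · simp [← h0]
    · rw [Real.log_div (mul_pos (pr_pos hp F h0) (pr_pos hp G h0)).ne'
        (mul_pos (pr_pos hp T h0) (pr_pos hp h h0)).ne',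
        Real.log_mul (pr_pos hp F h0).ne' (pr_pos hp G h0).ne',
        Real.log_mul (pr_pos hp T h0).ne' (pr_pos hp h h0).ne']
      ring
  rw [e] at this
  linarith

lemma Hd_const (hp : IsPW p) (c : α) : Hd p (fun _ => c) = 0 := by
  simp [Hd, pr, hp.sum_one]

lemma Hd_subadd (hp : IsPW p) (f : Ω → α) (g : Ω → β) :
    Hd p (fun ω => (f ω, g ω)) ≤ Hd p f + Hd p g := by
  have := Hd_submod hp f g (fun _ => ())
  rw [Hd_const hp] at this
  rw [Hd_congr (p := p) (f := fun ω => (f ω, g ω)) (g := fun ω => (f ω, g ω, ())) (by simp),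
    Hd_congr (p := p) (f := f) (g := fun ω => (f ω, ())) (by simp),
    Hd_congr (p := p) (f := g) (g := fun ω => (g ω, ())) (by simp)] at this
  linarith

/-- Conditional Gibbs inequality: `H(f | g)` is at most the cross-entropy of `f` relative to any
sub-probability kernel `W · (g ω)`. It is only required that the kernel have total mass at most one
on a finite set `V (g ω)` that carries `f`. -/
lemma Hd_cond_le (hp : IsPW p) (f : Ω → α) (g : Ω → β) (W : α → β → ℝ) (V : β → Finset α)
    (hV : ∀ ω, 0 < p ω → f ω ∈ V (g ω)) (hW0 : ∀ v y, 0 ≤ W v y)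
    (hW : ∀ ω, 0 < p ω → 0 < W (f ω) (g ω))
    (hs : ∀ y, ∑ v ∈ V y, W v y ≤ 1) :
    Hd p (fun ω => (f ω, g ω)) - Hd p g ≤ ∑ ω, p ω * (-Real.log (W (f ω) (g ω))) := by
  classical
  set T := fun ω => (f ω, g ω)
  have key : ∑ ω, p ω * (pr p g ω * W (f ω) (g ω) / pr p T ω) ≤ 1 := by
    calc ∑ ω, p ω * (pr p g ω * W (f ω) (g ω) / pr p T ω)
        = ∑ ω, ∑ c, (if g c = g ω then p c else 0) * (p ω * W (f ω) (g ω) / pr p T ω) := by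
          refine Finset.sum_congr rfl fun ω _ => ?_
          rw [← Finset.sum_mul, sum_ite_eq_pr]
          ring
      _ = ∑ c, ∑ ω, (if g c = g ω then p c else 0) * (p ω * W (f ω) (g ω) / pr p T ω) :=
          Finset.sum_comm
      _ ≤ ∑ c, p c := by
          refine Finset.sum_le_sum fun c _ => ?_
          have e : ∀ ω, (if g c = g ω then p c else 0) * (p ω * W (f ω) (g ω) / pr p T ω)
              = p c * ∑ v ∈ V (g c), W v (g c) *
                  (if T ω = (v, g c) then p ω / pr p T ω else 0) := by
            intro ω
            rcases (hp.nonneg ω).eq_or_lt with h0 | h0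
            · simp [← h0]
            by_cases hg : g c = g ω
            · rw [if_pos hg, Finset.sum_eq_single (f ω)]
              · simp only [T, hg, if_true]; ring
              · intro v _ hv
                rw [if_neg, mul_zero]
                intro hT
                exact hv (congrArg (·.1) hT).symm
              · intro h; rw [hg] at h; exact absurd (hV ω h0) h
            · rw [if_neg hg, zero_mul, Finset.sum_eq_zero, mul_zero]
              intro v _
              rw [if_neg, mul_zero]
              intro hT
              exact hg (congrArg (·.2) hT).symm
          rw [Finset.sum_congr rfl fun ω _ => e ω, ← Finset.mul_sum, Finset.sum_comm]
          refine mul_le_of_le_one_right (hp.nonneg c) (le_trans ?_ (hs (g c)))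
          refine Finset.sum_le_sum fun v _ => ?_
          rw [← Finset.mul_sum]
          exact mul_le_of_le_one_right (hW0 _ _) (class_sum_le T _)
      _ = 1 := hp.sum_one
  have := gibbs hp _ (fun ω h0 => div_pos (mul_pos (pr_pos hp g h0) (hW ω h0))
    (pr_pos hp T h0)) 1 key one_pos
  rw [Real.log_one] at this
  have e : ∑ ω, p ω * Real.log (pr p g ω * W (f ω) (g ω) / pr p T ω)
      = Hd p T - Hd p g - ∑ ω, p ω * (-Real.log (W (f ω) (g ω))) := by
    simp only [Hd, ← Finset.sum_sub_distrib]
    refine Finset.sum_congr rfl fun ω _ => ?_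
    rcases (hp.nonneg ω).eq_or_lt with h0 | h0
    · simp [← h0]
    · rw [Real.log_div (mul_pos (pr_pos hp g h0) (hW ω h0)).ne' (pr_pos hp T h0).ne',
        Real.log_mul (pr_pos hp g h0).ne' (hW ω h0).ne']
      ring
  rw [e] at this
  linarith

/-- If `f` takes at most `C` values once `g` is known, then `H(f, g) ≤ H(g) + log C`. -/
lemma Hd_cond_card (hp : IsPW p) (f : Ω → α) (g : Ω → β) (V : β → Finset α) (C : ℕ) (hC : 0 < C)
    (hV : ∀ ω, f ω ∈ V (g ω)) (hc : ∀ y, (V y).card ≤ C) :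
    Hd p (fun ω => (f ω, g ω)) ≤ Hd p g + Real.log C := by
  have hC' : (0:ℝ) < C := by exact_mod_cast hC
  have := Hd_cond_le hp f g (fun _ _ => (C:ℝ)⁻¹) V (fun ω _ => hV ω) (fun _ _ => by positivity)
    (fun _ _ => by positivity) (fun y => by
      rw [Finset.sum_const, nsmul_eq_mul, ← div_eq_mul_inv]
      exact (div_le_one hC').2 (by exact_mod_cast hc y))
  rw [← Finset.sum_mul, hp.sum_one, Real.log_inv] at this
  linarith

/-- By Jensen, `H(f | g)` is at least `-log` of the mean conditional probability of the value of
`f` given `g`. That mean is the probability that two copies of `f`, independent given `g`,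
coincide. -/
lemma Hd_cond_ge (hp : IsPW p) (f : Ω → α) (g : Ω → β) (c : ℝ) (hc : 0 < c)
    (h : ∑ ω, p ω * (pr p (fun ω => (f ω, g ω)) ω / pr p g ω) ≤ c) :
    -Real.log c ≤ Hd p (fun ω => (f ω, g ω)) - Hd p g := by
  have := gibbs hp _ (fun ω h0 => div_pos (pr_pos hp (fun ω => (f ω, g ω)) h0)
    (pr_pos hp g h0)) c h hc
  have e : ∑ ω, p ω * Real.log (pr p (fun ω => (f ω, g ω)) ω / pr p g ω)
      = Hd p g - Hd p (fun ω => (f ω, g ω)) := by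
    simp only [Hd, ← Finset.sum_sub_distrib]
    refine Finset.sum_congr rfl fun ω _ => ?_
    rcases (hp.nonneg ω).eq_or_lt with h0 | h0
    · simp [← h0]
    · rw [Real.log_div (pr_pos hp _ h0).ne' (pr_pos hp g h0).ne']
      ring
  rw [e] at this
  linarith

/-- The entropy of `f ∘ π` under `p'` is that of `f` under the image `p` of `p'` by `π`. -/
lemma Hd_map {Ω' : Type*} [Fintype Ω'] {p' : Ω' → ℝ} (π : Ω' → Ω)
    (hπ : ∀ F : Ω → ℝ, ∑ ω', p' ω' * F (π ω') = ∑ ω, p ω * F ω) (f : Ω → α) :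
    Hd p' (fun ω' => f (π ω')) = Hd p f := by
  classical
  have e : ∀ ω', pr p' (fun ω' => f (π ω')) ω' = pr p f (π ω') := by
    intro ω'
    have := hπ (fun ω => if f ω = f (π ω') then 1 else 0)
    simpa [pr] using this
  simp only [Hd, e]
  exact hπ fun ω => -Real.log (pr p f ω)

variable {Ω' : Type*} [Fintype Ω'] {p' : Ω' → ℝ}

lemma IsPW.prod (hp : IsPW p) (hp' : IsPW p') : IsPW (fun z : Ω × Ω' => p z.1 * p' z.2) where
  nonneg z := mul_nonneg (hp.nonneg _) (hp'.nonneg _)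
  sum_one := by
    rw [Fintype.sum_prod_type]
    simp [← Finset.mul_sum, hp.sum_one, hp'.sum_one]

lemma Hd_fst (hp' : IsPW p') (f : Ω → α) :
    Hd (fun z : Ω × Ω' => p z.1 * p' z.2) (fun z => f z.1) = Hd p f := by
  refine Hd_map Prod.fst (fun F => ?_) f
  rw [Fintype.sum_prod_type]
  refine Finset.sum_congr rfl fun ω _ => ?_
  simp only
  rw [← Finset.sum_mul, ← Finset.mul_sum, hp'.sum_one, mul_one]

lemma Hd_snd (hp : IsPW p) (f : Ω' → α) :
    Hd (fun z : Ω × Ω' => p z.1 * p' z.2) (fun z => f z.2) = Hd p' f := by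
  refine Hd_map Prod.snd (fun F => ?_) f
  rw [Fintype.sum_prod_type, Finset.sum_comm]
  refine Finset.sum_congr rfl fun ω _ => ?_
  simp only
  rw [← Finset.sum_mul, ← Finset.sum_mul, hp.sum_one, one_mul]

lemma pr_prod (f : Ω → α) (g : Ω' → β) (z : Ω × Ω') :
    pr (fun z : Ω × Ω' => p z.1 * p' z.2) (fun z => (f z.1, g z.2)) z
      = pr p f z.1 * pr p' g z.2 := by
  classical
  simp only [pr, Finset.sum_mul_sum]
  rw [Fintype.sum_prod_type]
  refine Finset.sum_congr rfl fun a _ => Finset.sum_congr rfl fun c _ => ?_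
  by_cases h1 : f a = f z.1 <;> by_cases h2 : g c = g z.2 <;> simp [h1, h2]

lemma Hd_prod (hp : IsPW p) (hp' : IsPW p') (f : Ω → α) (g : Ω' → β) :
    Hd (fun z : Ω × Ω' => p z.1 * p' z.2) (fun z => (f z.1, g z.2)) = Hd p f + Hd p' g := by
  rw [← Hd_fst (p := p) hp' f, ← Hd_snd (p' := p') hp g]
  simp only [Hd, ← Finset.sum_add_distrib]
  refine Finset.sum_congr rfl fun z _ => ?_
  rw [pr_prod]
  rcases (hp.nonneg z.1).eq_or_lt with h0 | h0
  · simp [← h0]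
  rcases (hp'.nonneg z.2).eq_or_lt with h1 | h1
  · simp [← h1]
  have e1 := pr_prod (p := p) (p' := p') f (fun _ => ()) z
  have e2 := pr_prod (p := p) (p' := p') (fun _ => ()) g z
  rw [pr_congr (p := fun z : Ω × Ω' => p z.1 * p' z.2) (f := fun z => f z.1) (by simp)] at e1
  rw [pr_congr (p := fun z : Ω × Ω' => p z.1 * p' z.2) (f := fun z => g z.2) (by simp)] at e2
  rw [e1, e2, Real.log_mul (pr_pos hp f h0).ne' (pr_pos hp' g h1).ne']
  have e3 : pr p (fun _ => ()) z.1 = 1 := by simp [pr, hp.sum_one]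
  have e4 : pr p' (fun _ => ()) z.2 = 1 := by simp [pr, hp'.sum_one]
  rw [e3, e4, mul_one, one_mul]
  ring

end lib

/-! ### Product weights and the Kaimanovich–Vershik inequality -/

/-- Weights of `N` independent copies of `p`. -/
def pw {A : Type*} (p : A → ℝ) (N : ℕ) : (Fin N → A) → ℝ := fun x => ∏ j, p (x j)

lemma pw_cons {A : Type*} {p : A → ℝ} {N : ℕ} (a : A) (t : Fin N → A) :
    pw p (N + 1) (Fin.cons a t) = p a * pw p N t := by
  simp [pw, Fin.prod_univ_succ]

section prodlib
variable {A B C : Type*} [Fintype A] [Fintype B] [Fintype C] {p : A → ℝ} {q : B → ℝ} {r : C → ℝ}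

lemma sum_pi_succ {N : ℕ} (F : (Fin (N + 1) → A) → ℝ) :
    ∑ x, F x = ∑ a : A, ∑ t : Fin N → A, F (Fin.cons a t) := by
  rw [← (Fin.consEquiv fun _ : Fin (N + 1) => A).sum_comp, Fintype.sum_prod_type]
  rfl

lemma IsPW.pw (hp : IsPW p) (N : ℕ) : IsPW (pw p N) where
  nonneg x := Finset.prod_nonneg fun j _ => hp.nonneg _
  sum_one := by
    induction N with
    | zero => simp [Skew.pw]
    | succ N ih =>
      rw [sum_pi_succ]
      simp only [pw_cons, ← Finset.mul_sum, ih, mul_one, hp.sum_one]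

lemma pw_mean_zero (hp : IsPW p) (G : A → ℝ) (hG : ∑ a, p a * G a = 0) (N : ℕ) :
    ∑ x, pw p N x * ∑ j, G (x j) = 0 := by
  induction N with
  | zero => simp
  | succ N ih =>
    rw [sum_pi_succ]
    have e : ∀ a (t : Fin N → A), pw p (N + 1) (Fin.cons a t) *
        ∑ j, G ((Fin.cons a t : Fin (N + 1) → A) j)
        = (p a * G a) * pw p N t + p a * (pw p N t * ∑ j, G (t j)) := by
      intro a t
      rw [pw_cons, Fin.sum_univ_succ]
      simp only [Fin.cons_zero, Fin.cons_succ]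
      ring
    simp only [e, Finset.sum_add_distrib, ← Finset.mul_sum, ih, (hp.pw N).sum_one]
    simp [hG]

/-- A sum of `N` independent centred variables has variance `N` times that of one of them. -/
lemma pw_second_moment (hp : IsPW p) (G : A → ℝ) (hG : ∑ a, p a * G a = 0) (N : ℕ) :
    ∑ x, pw p N x * (∑ j, G (x j)) ^ 2 = N * ∑ a, p a * G a ^ 2 := by
  induction N with
  | zero => simp
  | succ N ih =>
    rw [sum_pi_succ]
    have e : ∀ a (t : Fin N → A), pw p (N + 1) (Fin.cons a t) *
        (∑ j, G ((Fin.cons a t : Fin (N + 1) → A) j)) ^ 2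
        = (p a * G a ^ 2) * pw p N t + (2 * (p a * G a)) * (pw p N t * ∑ j, G (t j))
          + p a * (pw p N t * (∑ j, G (t j)) ^ 2) := by
      intro a t
      rw [pw_cons, Fin.sum_univ_succ]
      simp only [Fin.cons_zero, Fin.cons_succ]
      ring
    simp only [e, Finset.sum_add_distrib, ← Finset.mul_sum, ih, (hp.pw N).sum_one,
      pw_mean_zero hp G hG N]
    simp only [← Finset.sum_mul, hp.sum_one, mul_zero, Finset.sum_const_zero]
    push_cast
    ring

lemma Hd_equiv {Ω Ω' α : Type*} [Fintype Ω] [Fintype Ω'] {p : Ω → ℝ} {p' : Ω' → ℝ} (e : Ω' ≃ Ω)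
    (h : ∀ ω, p' ω = p (e ω)) (f : Ω → α) : Hd p' (fun ω => f (e ω)) = Hd p f :=
  Hd_map e (fun F => by rw [← e.sum_comp]; simp [h]) f

/-- Submodularity of the entropy of sums of independent variables:
`H(f + g + h) + H(f) ≤ H(f + g) + H(f + h)`. -/
lemma Hd_triple (hp : IsPW p) (hq : IsPW q) (hr : IsPW r) (f : A → ℤ) (g : B → ℤ) (h : C → ℤ) :
    Hd (fun z : A × (B × C) => p z.1 * (q z.2.1 * r z.2.2)) (fun z => f z.1 + g z.2.1 + h z.2.2)
      + Hd p f ≤ Hd (fun z : A × B => p z.1 * q z.2) (fun z => f z.1 + g z.2)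
        + Hd (fun z : A × C => p z.1 * r z.2) (fun z => f z.1 + h z.2) := by
  have hw := hp.prod (hq.prod hr)
  set w := (fun z : A × (B × C) => p z.1 * (q z.2.1 * r z.2.2))
  have h1 := Hd_submod hw (fun z => h z.2.2) (fun z => (f z.1 + h z.2.2, g z.2.1))
    (fun z => f z.1 + g z.2.1 + h z.2.2)
  have h2 : Hd w (fun z => (h z.2.2, (f z.1 + h z.2.2, g z.2.1), f z.1 + g z.2.1 + h z.2.2))
      = Hd p f + (Hd q g + Hd r h) := by
    rw [← Hd_prod hq hr, ← Hd_prod hp (hq.prod hr)]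
    refine Hd_congr fun a c => ?_
    simp only [Prod.mk.injEq]
    constructor
    · rintro ⟨h1, ⟨h2, h3⟩, h4⟩; refine ⟨?_, h3, h1⟩; omega
    · rintro ⟨h1, h2, h3⟩; refine ⟨h3, ⟨?_, h2⟩, ?_⟩ <;> omega
  have h3 : Hd w (fun z => (h z.2.2, f z.1 + g z.2.1 + h z.2.2))
      ≤ Hd r h + Hd (fun z : A × B => p z.1 * q z.2) (fun z => f z.1 + g z.2) := by
    have e : Hd w (fun z => (h z.2.2, f z.1 + g z.2.1 + h z.2.2))
        = Hd w (fun z => (h z.2.2, f z.1 + g z.2.1)) := by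
      refine Hd_congr fun a c => ?_
      simp only [Prod.mk.injEq]
      constructor <;> rintro ⟨h1, h2⟩ <;> refine ⟨h1, ?_⟩ <;> omega
    rw [e]
    refine (Hd_subadd hw _ _).trans_eq ?_
    congr 1
    · rw [← Hd_snd (p := q) hq h]
      exact Hd_snd (p := p) (p' := fun z : B × C => q z.1 * r z.2) hp fun z : B × C => h z.2
    · refine Hd_map (fun z : A × (B × C) => (z.1, z.2.1)) (fun F => ?_) (fun z : A × B => f z.1 + g z.2)
      simp only [Fintype.sum_prod_type, w]
      refine Finset.sum_congr rfl fun a _ => Finset.sum_congr rfl fun c _ => ?_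
      rw [← Finset.sum_mul, ← Finset.mul_sum, ← Finset.mul_sum, hr.sum_one, mul_one]
  have h4 : Hd w (fun z => ((f z.1 + h z.2.2, g z.2.1), f z.1 + g z.2.1 + h z.2.2))
      ≤ Hd (fun z : A × C => p z.1 * r z.2) (fun z => f z.1 + h z.2) + Hd q g := by
    have e : Hd w (fun z => ((f z.1 + h z.2.2, g z.2.1), f z.1 + g z.2.1 + h z.2.2))
        = Hd w (fun z => (f z.1 + h z.2.2, g z.2.1)) := by
      refine Hd_congr fun a c => ?_
      simp only [Prod.mk.injEq]
      constructor
      · rintro ⟨h1, h2⟩; exact h1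
      · rintro ⟨h1, h2⟩; refine ⟨⟨h1, h2⟩, ?_⟩; omega
    rw [e]
    refine (Hd_subadd hw _ _).trans_eq ?_
    congr 1
    · refine Hd_map (fun z : A × (B × C) => (z.1, z.2.2)) (fun F => ?_) (fun z : A × C => f z.1 + h z.2)
      simp only [Fintype.sum_prod_type, w]
      refine Finset.sum_congr rfl fun a _ => ?_
      rw [Finset.sum_comm]
      refine Finset.sum_congr rfl fun c _ => ?_
      rw [← Finset.sum_mul, ← Finset.mul_sum, ← Finset.sum_mul, hq.sum_one, one_mul]
    · rw [← Hd_fst (p := q) hr g]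
      exact Hd_snd (p := p) (p' := fun z : B × C => q z.1 * r z.2) hp fun z : B × C => g z.1
  rw [h2] at h1
  linarith

/-- Kaimanovich–Vershik: adding `N` independent copies of `X` to `Y` raises the entropy by at most
`N` times what a single copy does. -/
lemma Hd_iterate (hp : IsPW p) (hq : IsPW q) (X : A → ℤ) (Y : B → ℤ) (N : ℕ) :
    Hd (fun z : B × (Fin N → A) => q z.1 * pw p N z.2) (fun z => Y z.1 + ∑ j, X (z.2 j))
      ≤ Hd q Y + N * (Hd (fun z : B × A => q z.1 * p z.2) (fun z => Y z.1 + X z.2) - Hd q Y) := by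
  induction N with
  | zero =>
    have := Hd_fst (p := q) (hp.pw 0) Y
    simp [this]
  | succ N ih =>
    have h := Hd_triple hq (hp.pw N) hp Y (fun x => ∑ j, X (x j)) X
    have e : Hd (fun z : B × (Fin (N + 1) → A) => q z.1 * pw p (N + 1) z.2)
          (fun z => Y z.1 + ∑ j, X (z.2 j))
        = Hd (fun z : B × ((Fin N → A) × A) => q z.1 * (pw p N z.2.1 * p z.2.2))
          (fun z => Y z.1 + ∑ j, X (z.2.1 j) + X z.2.2) := by
      rw [← Hd_map (p' := fun z : B × (Fin (N + 1) → A) => q z.1 * pw p (N + 1) z.2)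
        (fun z : B × (Fin (N + 1) → A) => (z.1, (Fin.tail z.2, z.2 0)))]
      · congr 1
        ext z
        simp [Fin.sum_univ_succ, Fin.tail]
        ring
      · intro F
        simp only [Fintype.sum_prod_type]
        refine Finset.sum_congr rfl fun y _ => ?_
        rw [sum_pi_succ, Finset.sum_comm]
        simp only [pw_cons, Fin.tail_cons, Fin.cons_zero]
        refine Finset.sum_congr rfl fun a _ => Finset.sum_congr rfl fun c _ => ?_
        ring
    rw [e]
    push_cast
    linarith

end prodlib

/-! ### Littlewood–Offord counting -/

lemma centralBinom_sq_le (t : ℕ) : t.centralBinom ^ 2 * (2 * t + 1) ≤ 4 ^ (2 * t) := by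
  induction t with
  | zero => simp
  | succ t ih =>
    have h := Nat.succ_mul_centralBinom_succ t
    set x := t.centralBinom
    set y := (t + 1).centralBinom
    have h2 : (t + 1) ^ 2 * (y ^ 2 * (2 * (t + 1) + 1)) ≤ (t + 1) ^ 2 * 4 ^ (2 * (t + 1)) := by
      calc (t + 1) ^ 2 * (y ^ 2 * (2 * (t + 1) + 1)) = ((t + 1) * y) ^ 2 * (2 * t + 3) := by ring
        _ = (x ^ 2 * (2 * t + 1)) * (4 * (2 * t + 1) * (2 * t + 3)) := by rw [h]; ring
        _ ≤ 4 ^ (2 * t) * (16 * (t + 1) ^ 2) := by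
            refine Nat.mul_le_mul ih ?_
            nlinarith
        _ = (t + 1) ^ 2 * 4 ^ (2 * (t + 1)) := by ring
    exact Nat.le_of_mul_le_mul_left h2 (by positivity)

/-- The central binomial coefficient is at most `2 ^ K / √(K + 1)`. -/
lemma choose_half_sq_le (K : ℕ) : (K.choose (K / 2)) ^ 2 * (K + 1) ≤ 4 ^ K := by
  obtain ⟨t, rfl | rfl⟩ := Nat.even_or_odd' K
  · have := centralBinom_sq_le t
    rw [Nat.centralBinom_eq_two_mul_choose] at this
    simpa using this
  · have h1 : (2 * t + 1) / 2 = t := by omega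
    rw [h1]
    have h := centralBinom_sq_le (t + 1)
    have h2 : (t + 1).centralBinom = 2 * (2 * t + 1).choose t := by
      rw [Nat.centralBinom_eq_two_mul_choose, show 2 * (t + 1) = (2 * t + 1) + 1 by ring,
        Nat.choose_succ_succ', Nat.choose_symm_half]
      ring
    rw [h2] at h
    have e : 4 ^ (2 * (t + 1)) = 4 * 4 ^ (2 * t + 1) := by ring
    rw [e] at h
    nlinarith [sq_nonneg ((2 * t + 1).choose t)]

/-- The sum of `D` over `V`, with the signs of the terms indexed by `T` reversed. -/
def ssum {ι : Type*} [DecidableEq ι] (D : ι → ℤ) (V T : Finset ι) : ℤ :=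
  ∑ j ∈ V, if j ∈ T then -D j else D j

/-- The Littlewood–Offord bound of Erdős. After exchanging the roles of the two signs at the indices
where `D` is negative, the sign patterns whose sum lies in an interval of length `2 * d` form an
antichain, since enlarging the pattern lowers the sum by at least `2 * d`; Sperner's theorem
applies. -/
lemma lo_base {α : Type*} [Fintype α] [DecidableEq α] (D : α → ℤ) (d : ℤ)
    (hD : ∀ j, d ≤ |D j|) (u : ℤ) :
    (Finset.univ.filter fun T : Finset α => u ≤ ssum D Finset.univ T ∧
      ssum D Finset.univ T < u + 2 * d).card ≤ (Fintype.card α).choose (Fintype.card α / 2) := by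
  classical
  set Ng : Finset α := Finset.univ.filter fun j => D j < 0
  set 𝒜 := (Finset.univ.filter fun T : Finset α => u ≤ ssum D Finset.univ T ∧
      ssum D Finset.univ T < u + 2 * d)
  have hinj : Function.Injective fun T : Finset α => symmDiff T Ng :=
    symmDiff_left_injective Ng
  rw [← Finset.card_image_of_injective 𝒜 hinj]
  refine IsAntichain.sperner ?_
  have hs : ∀ T, ssum D Finset.univ T
      = ∑ j, if j ∈ symmDiff T Ng then -|D j| else |D j| := by
    intro T
    refine Finset.sum_congr rfl fun j _ => ?_
    by_cases h1 : j ∈ T <;> by_cases h2 : D j < 0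
    · simp [Finset.mem_symmDiff, h1, h2, Ng, abs_of_neg h2]
    · simp [Finset.mem_symmDiff, h1, h2, Ng, abs_of_nonneg (not_lt.1 h2)]
    · simp [Finset.mem_symmDiff, h1, h2, Ng, abs_of_neg h2]
    · simp [Finset.mem_symmDiff, h1, h2, Ng, abs_of_nonneg (not_lt.1 h2)]
  rintro E1 h1 E2 h2 hne hsub
  simp only [Finset.coe_image, Set.mem_image, Finset.mem_coe] at h1 h2
  obtain ⟨T1, hT1, rfl⟩ := h1
  obtain ⟨T2, hT2, rfl⟩ := h2
  simp only [𝒜, Finset.mem_filter, Finset.mem_univ, true_and] at hT1 hT2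
  rw [hs] at hT1 hT2
  set E1 := symmDiff T1 Ng
  set E2 := symmDiff T2 Ng
  obtain ⟨j0, hj2, hj1⟩ : ∃ j ∈ E2, j ∉ E1 := by
    by_contra h
    push Not at h
    exact hne (Finset.Subset.antisymm hsub h)
  have : 2 * d ≤ ∑ j, ((if j ∈ E1 then -|D j| else |D j|) - (if j ∈ E2 then -|D j| else |D j|)) := by
    have h0 : ∀ j ∈ Finset.univ, (0:ℤ) ≤ ((if j ∈ E1 then -|D j| else |D j|) -
        (if j ∈ E2 then -|D j| else |D j|)) := by
      intro j _
      have := abs_nonneg (D j)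
      by_cases h1 : j ∈ E1
      · simp [h1, hsub h1]
      · by_cases h2 : j ∈ E2 <;> simp [h1, h2]
    refine le_trans ?_ (Finset.single_le_sum h0 (Finset.mem_univ j0))
    have := hD j0
    simp [hj1, hj2]
    linarith
  rw [Finset.sum_sub_distrib] at this
  linarith [hT1.2, hT2.1]

/-- The Littlewood–Offord bound when only the terms indexed by `J` are large: the signs on `V` are
fixed first, which translates the interval. -/
lemma lo_card {ι : Type*} [DecidableEq ι] (D : ι → ℤ) (d : ℤ) (J : Finset ι)
    (hD : ∀ j ∈ J, d ≤ |D j|) (V : Finset ι) (hV : Disjoint V J) (u : ℤ) :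
    ((J ∪ V).powerset.filter fun T => u ≤ ssum D (J ∪ V) T ∧
      ssum D (J ∪ V) T < u + 2 * d).card ≤ 2 ^ V.card * J.card.choose (J.card / 2) := by
  classical
  induction V using Finset.induction_on generalizing u with
  | empty =>
    have := lo_base (fun j : J => D j) d (fun j => hD j j.2) u
    simp only [Finset.union_empty, Finset.card_empty, pow_zero, one_mul]
    rw [Fintype.card_coe] at this
    refine le_trans ?_ this
    refine Finset.card_le_card_of_injOn (fun T => T.subtype (· ∈ J)) ?_ ?_
    · intro T hT
      simp only [Finset.coe_filter, Finset.mem_powerset, Set.mem_ofPred_eq] at hT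
      have e : ssum (fun j : J => D j) Finset.univ (T.subtype (· ∈ J)) = ssum D J T := by
        unfold ssum
        rw [← Finset.sum_coe_sort J]
        refine Finset.sum_congr rfl fun j _ => ?_
        simp
      simp only [Finset.coe_filter, Finset.mem_univ, true_and, Set.mem_ofPred_eq]
      rw [e]
      exact hT.2
    · intro T hT T' hT' h
      simp only [Finset.coe_filter, Finset.mem_powerset, Set.mem_ofPred_eq] at hT hT'
      ext j
      by_cases hj : j ∈ J
      · have := congrArg (fun S => (⟨j, hj⟩ : J) ∈ S) h
        simpa using this
      · exact ⟨fun h => absurd (hT.1 h) hj, fun h => absurd (hT'.1 h) hj⟩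
  | insert a V ha ih =>
    rw [Finset.disjoint_insert_left] at hV
    have haJ : a ∉ J ∪ V := by simp [ha, hV.1]
    rw [Finset.union_insert, Finset.card_filter, Finset.sum_powerset_insert haJ,
      ← Finset.card_filter, ← Finset.card_filter, Finset.card_insert_of_notMem ha, pow_succ]
    have e1 : ∀ T ∈ (J ∪ V).powerset, ssum D (insert a (J ∪ V)) T = ssum D (J ∪ V) T + D a := by
      intro T hT
      have : a ∉ T := fun h => haJ (Finset.mem_powerset.1 hT h)
      unfold ssum
      rw [Finset.sum_insert haJ, if_neg this, add_comm]
    have e2 : ∀ T ∈ (J ∪ V).powerset,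
        ssum D (insert a (J ∪ V)) (insert a T) = ssum D (J ∪ V) T - D a := by
      intro T hT
      unfold ssum
      rw [Finset.sum_insert haJ, if_pos (Finset.mem_insert_self _ _), sub_eq_neg_add]
      congr 1
      refine Finset.sum_congr rfl fun j hj => ?_
      have : j ≠ a := fun h => haJ (h ▸ hj)
      simp [Finset.mem_insert, this]
    have i1 := ih hV.2 (u - D a)
    have i2 := ih hV.2 (u + D a)
    rw [Finset.filter_congr (q := fun T => u - D a ≤ ssum D (J ∪ V) T ∧
      ssum D (J ∪ V) T < u - D a + 2 * d) (fun T hT => by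
        rw [e1 T hT]; constructor <;> rintro ⟨h1, h2⟩ <;> constructor <;> linarith)]
    rw [Finset.filter_congr (p := fun T => u ≤ ssum D (insert a (J ∪ V)) (insert a T) ∧ _)
      (q := fun T => u + D a ≤ ssum D (J ∪ V) T ∧
      ssum D (J ∪ V) T < u + D a + 2 * d) (fun T hT => by
        rw [e2 T hT]; constructor <;> rintro ⟨h1, h2⟩ <;> constructor <;> linarith)]
    linarith

/-- Among the `2 ^ N` sign patterns, the proportion with `|ssum| < w * d` is at most `w / √(K + 1)`,
where `K` counts the terms of size at least `d`: the range is covered by `w` intervals of length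
`2 * d`. -/
lemma lo_count {N : ℕ} (D : Fin N → ℤ) (d w : ℕ) (hd : 0 < d) :
    (Finset.univ.filter fun T : Finset (Fin N) => |ssum D Finset.univ T| < (w * d : ℕ)).card
      * Real.sqrt ((Finset.univ.filter fun j => (d:ℤ) ≤ |D j|).card + 1)
      ≤ w * 2 ^ N := by
  classical
  set J := Finset.univ.filter fun j => (d:ℤ) ≤ |D j|
  have hJ : J ∪ (Finset.univ \ J) = Finset.univ := by simp
  have h1 : ∀ i : ℕ, (Finset.univ.filter fun T : Finset (Fin N) =>
      (-(w*d:ℤ) + 2 * d * i) ≤ ssum D Finset.univ T ∧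
      ssum D Finset.univ T < (-(w*d:ℤ) + 2 * d * i) + 2 * d).card
      ≤ 2 ^ (N - J.card) * J.card.choose (J.card / 2) := by
    intro i
    have := lo_card D d J (fun j hj => by simpa [J] using hj)
      (Finset.univ \ J) Finset.sdiff_disjoint (-(w*d:ℤ) + 2 * d * i)
    rw [hJ, Finset.powerset_univ, Finset.card_sdiff_of_subset (Finset.subset_univ _)] at this
    simpa using this
  have h2 : (Finset.univ.filter fun T : Finset (Fin N) => |ssum D Finset.univ T| < (w * d : ℕ)).card
      ≤ w * (2 ^ (N - J.card) * J.card.choose (J.card / 2)) := by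
    calc _ ≤ ((Finset.range w).biUnion fun i => (Finset.univ.filter fun T : Finset (Fin N) =>
      (-(w*d:ℤ) + 2 * d * i) ≤ ssum D Finset.univ T ∧
      ssum D Finset.univ T < (-(w*d:ℤ) + 2 * d * i) + 2 * d)).card := by
          refine Finset.card_le_card fun T hT => ?_
          simp only [Finset.mem_filter, Finset.mem_univ, true_and, abs_lt] at hT
          simp only [Finset.mem_biUnion, Finset.mem_range, Finset.mem_filter, Finset.mem_univ,
            true_and]
          set s := ssum D Finset.univ T
          push_cast at hT
          have hd' : (0:ℤ) < 2 * d := by positivity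
          have hq0 : 0 ≤ (s + w * d) / (2 * d) := Int.ediv_nonneg (by linarith) hd'.le
          have hq1 : (s + w * d) / (2 * d) < w := by
            rw [Int.ediv_lt_iff_lt_mul hd']; linarith
          have hq2 := Int.emod_add_mul_ediv (s + w * d) (2 * d)
          have hq3 := Int.emod_nonneg (s + w * d) hd'.ne'
          have hq4 := Int.emod_lt_of_pos (s + w * d) hd'
          refine ⟨((s + w * d) / (2 * d)).toNat, by omega, ?_⟩
          rw [Int.toNat_of_nonneg hq0]
          constructor <;> linarith
      _ ≤ ∑ i ∈ Finset.range w, 2 ^ (N - J.card) * J.card.choose (J.card / 2) :=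
          Finset.card_biUnion_le.trans (Finset.sum_le_sum fun i _ => h1 i)
      _ = _ := by simp
  have hJN : J.card ≤ N := by simpa using Finset.card_le_univ J
  have h3 : (J.card.choose (J.card / 2) : ℝ) * Real.sqrt (J.card + 1) ≤ 2 ^ J.card := by
    have h := choose_half_sq_le J.card
    have h' : ((J.card.choose (J.card / 2) : ℝ)) ^ 2 * (J.card + 1) ≤ 4 ^ J.card := by
      exact_mod_cast h
    refine (pow_le_pow_iff_left₀ (by positivity) (by positivity) two_ne_zero).1 ?_
    rw [mul_pow, Real.sq_sqrt (by positivity), ← pow_mul, mul_comm _ 2, pow_mul]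
    norm_num
    exact h'
  calc _ ≤ ((w * (2 ^ (N - J.card) * J.card.choose (J.card / 2)) : ℕ) : ℝ)
        * Real.sqrt (J.card + 1) := by
        refine mul_le_mul_of_nonneg_right ?_ (Real.sqrt_nonneg _)
        exact_mod_cast h2
    _ = w * 2 ^ (N - J.card) * (J.card.choose (J.card / 2) * Real.sqrt (J.card + 1)) := by
        push_cast; ring
    _ ≤ w * 2 ^ (N - J.card) * 2 ^ J.card := mul_le_mul_of_nonneg_left h3 (by positivity)
    _ = w * 2 ^ N := by rw [mul_assoc, ← pow_add, Nat.sub_add_cancel hJN]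

/-! ### Small-ball estimate and conditionally independent copies -/

open Classical in
/-- Small-ball estimate for a sum of `N` independent copies of a symmetric variable `D`, symmetry
being witnessed by the weight-preserving map `sw` with `D ∘ sw = -D`. With `κ` the probability that
`|D| ≥ d`, the number of terms of size at least `d` is at least `N * κ / 2` outside an event of
probability at most `4 / (N * κ)`, by Chebyshev; on the complement, `lo_count` bounds the effect of
random signs. -/
lemma lo_prob {R : Type*} [Fintype R] {ρ : R → ℝ} (hρ : IsPW ρ) (sw : R ≃ R)
    (hsw : ∀ z, ρ (sw z) = ρ z) (D : R → ℤ) (hD : ∀ z, D (sw z) = -D z) (d w N : ℕ)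
    (hd : 0 < d) (hN : 0 < N) (κ : ℝ) (hκ : 0 < κ)
    (h : ∑ z, ρ z * (if (d:ℤ) ≤ |D z| then 1 else 0) = κ) :
    ∑ x, pw ρ N x * (if |∑ j, D (x j)| < (w * d : ℕ) then 1 else 0)
      ≤ w / Real.sqrt (N * κ / 2) + 4 / (N * κ) := by
  set G : R → ℝ := fun z => (if (d:ℤ) ≤ |D z| then 1 else 0) - κ with hGdef
  have hG : ∑ z, ρ z * G z = 0 := by
    simp only [G, mul_sub, Finset.sum_sub_distrib, h, ← Finset.sum_mul, hρ.sum_one]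
    ring
  have hG2 : ∑ z, ρ z * G z ^ 2 ≤ κ := by
    have : ∑ z, ρ z * G z ^ 2 = κ - κ ^ 2 := by
      have e : ∀ z, ρ z * G z ^ 2
          = ρ z * (if (d:ℤ) ≤ |D z| then 1 else 0) * (1 - 2 * κ) + ρ z * κ ^ 2 := by
        intro z
        simp only [G]
        split_ifs <;> ring
      simp only [e, Finset.sum_add_distrib, ← Finset.sum_mul, h, hρ.sum_one]
      ring
    rw [this]
    nlinarith
  have hN' : (0:ℝ) < N := by exact_mod_cast hN
  have hNκ : 0 < N * κ := mul_pos hN' hκ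
  set P := ∑ x, pw ρ N x * (if |∑ j, D (x j)| < (w * d : ℕ) then (1:ℝ) else 0)
  -- Symmetry: reversing the signs of the terms indexed by `T` does not change the probability.
  have hT : ∀ T : Finset (Fin N), P = ∑ x, pw ρ N x *
      (if |ssum (fun j => D (x j)) Finset.univ T| < (w * d : ℕ) then (1:ℝ) else 0) := by
    intro T
    rw [← (Equiv.piCongrRight fun j : Fin N => if j ∈ T then sw else Equiv.refl R).sum_comp]
    refine Finset.sum_congr rfl fun x _ => ?_
    congr 1
    · refine Finset.prod_congr rfl fun j _ => ?_
      simp only [Equiv.piCongrRight_apply, Pi.map_apply]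
      split_ifs <;> simp [hsw]
    · have e : ∑ j, D (x j) = ssum (fun j => D ((Equiv.piCongrRight fun j : Fin N =>
          if j ∈ T then sw else Equiv.refl R) x j)) Finset.univ T := by
        unfold ssum
        refine Finset.sum_congr rfl fun j _ => ?_
        simp only [Equiv.piCongrRight_apply, Pi.map_apply]
        split_ifs <;> simp [hD]
      rw [e]
  have h2 : (2:ℝ) ^ N * P = ∑ x, pw ρ N x * ((Finset.univ.filter fun T : Finset (Fin N) =>
      |ssum (fun j => D (x j)) Finset.univ T| < (w * d : ℕ)).card : ℝ) := by
    have : ∑ T : Finset (Fin N), P = (2:ℝ) ^ N * P := by simp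
    rw [← this, Finset.sum_congr rfl fun T _ => hT T, Finset.sum_comm]
    refine Finset.sum_congr rfl fun x _ => ?_
    rw [← Finset.mul_sum, Finset.sum_boole]
  have h3 : ∀ x : Fin N → R, ((Finset.univ.filter fun T : Finset (Fin N) =>
      |ssum (fun j => D (x j)) Finset.univ T| < (w * d : ℕ)).card : ℝ)
      ≤ 2 ^ N * (w / Real.sqrt (N * κ / 2) + 4 / (N * κ) ^ 2 * (∑ j, G (x j)) ^ 2) := by
    intro x
    set cnt := (Finset.univ.filter fun T : Finset (Fin N) =>
      |ssum (fun j => D (x j)) Finset.univ T| < (w * d : ℕ)).card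
    have l1 := lo_count (fun j => D (x j)) d w hd
    set K := (Finset.univ.filter fun j => (d:ℤ) ≤ |D (x j)|).card
    have hK : ∑ j, G (x j) = K - N * κ := by
      simp only [G, Finset.sum_sub_distrib, Finset.sum_boole]
      simp [K]
    have hcnt : (cnt : ℝ) ≤ 2 ^ N := by
      have := Finset.card_le_univ (Finset.univ.filter fun T : Finset (Fin N) =>
        |ssum (fun j => D (x j)) Finset.univ T| < (w * d : ℕ))
      rw [Fintype.card_finset, Fintype.card_fin] at this
      exact_mod_cast this
    have hs : 0 < Real.sqrt (N * κ / 2) := Real.sqrt_pos.2 (by linarith)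
    by_cases hc : N * κ / 2 ≤ K
    · have : (cnt : ℝ) ≤ 2 ^ N * (w / Real.sqrt (N * κ / 2)) := by
        rw [← mul_div_assoc, le_div_iff₀ hs, mul_comm _ (w:ℝ)]
        refine le_trans ?_ l1
        exact mul_le_mul_of_nonneg_left (Real.sqrt_le_sqrt (by linarith)) (by positivity)
      refine this.trans (mul_le_mul_of_nonneg_left ?_ (by positivity))
      have : 0 ≤ 4 / (N * κ) ^ 2 * (∑ j, G (x j)) ^ 2 := by positivity
      linarith
    · push Not at hc
      refine hcnt.trans (le_mul_of_one_le_right (by positivity) ?_)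
      have : 1 ≤ 4 / (N * κ) ^ 2 * (∑ j, G (x j)) ^ 2 := by
        rw [hK, div_mul_eq_mul_div, one_le_div (by positivity)]
        nlinarith
      have : 0 ≤ w / Real.sqrt (N * κ / 2) := by positivity
      linarith
  have h4 : (2:ℝ) ^ N * P ≤ 2 ^ N * (w / Real.sqrt (N * κ / 2) + 4 / (N * κ)) := by
    rw [h2]
    calc _ ≤ ∑ x, pw ρ N x * (2 ^ N * (w / Real.sqrt (N * κ / 2)
            + 4 / (N * κ) ^ 2 * (∑ j, G (x j)) ^ 2)) :=
          Finset.sum_le_sum fun x _ => mul_le_mul_of_nonneg_left (h3 x) ((hρ.pw N).nonneg x)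
      _ = 2 ^ N * (w / Real.sqrt (N * κ / 2) * ∑ x, pw ρ N x
            + 4 / (N * κ) ^ 2 * ∑ x, pw ρ N x * (∑ j, G (x j)) ^ 2) := by
          simp only [Finset.mul_sum, ← Finset.sum_add_distrib]
          exact Finset.sum_congr rfl fun x _ => by ring
      _ ≤ _ := by
          rw [(hρ.pw N).sum_one, pw_second_moment hρ G hG, mul_one]
          refine mul_le_mul_of_nonneg_left ?_ (by positivity)
          have : 4 / (N * κ) ^ 2 * (N * ∑ z, ρ z * G z ^ 2) ≤ 4 / (N * κ) := by
            calc _ ≤ 4 / (N * κ) ^ 2 * (N * κ) := by gcongr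
              _ = _ := by field_simp
          linarith
  exact le_of_mul_le_mul_left h4 (by positivity)

/-- Joint weights of two copies of `p` that share the value of `c` and are independent given that
value. If `c z.1` has probability zero then both factors of the numerator vanish, so the junk
quotient is the right value. -/
def cp {A γ : Type*} [Fintype A] (p : A → ℝ) (c : A → γ) : A × A → ℝ := by
  classical
  exact fun z => if c z.1 = c z.2 then p z.1 * p z.2 / pr p c z.1 else 0

section cplib
variable {A γ : Type*} [Fintype A] {p : A → ℝ}

lemma cp_swap (c : A → γ) (a a' : A) : cp p c (a', a) = cp p c (a, a') := by
  unfold cp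
  by_cases h : c a = c a'
  · simp only [h, if_true]
    rw [pr_eq_of_eq h]; ring
  · simp [h, Ne.symm h]

lemma cp_sum_right (hp : IsPW p) (c : A → γ) (a : A) : ∑ a', cp p c (a, a') = p a := by
  classical
  rcases (hp.nonneg a).eq_or_lt with h0 | h0
  · simp [cp, ← h0]
  have : ∀ a', cp p c (a, a') = (if c a' = c a then p a' else 0) * (p a / pr p c a) := by
    intro a'
    by_cases h : c a = c a'
    · simp only [cp, h, if_true]; ring
    · simp [cp, h, Ne.symm h]
  rw [Finset.sum_congr rfl fun a' _ => this a', ← Finset.sum_mul, sum_ite_eq_pr]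
  field_simp [(pr_pos hp c h0).ne']

lemma cp_sum_left (hp : IsPW p) (c : A → γ) (a : A) : ∑ a', cp p c (a', a) = p a := by
  simp only [fun a' => cp_swap (p := p) c a a', cp_sum_right hp c a]

lemma IsPW.cp (hp : IsPW p) (c : A → γ) : IsPW (cp p c) where
  nonneg z := by
    unfold Skew.cp
    split_ifs
    · exact div_nonneg (mul_nonneg (hp.nonneg _) (hp.nonneg _)) (pr_nonneg hp _ _)
    · exact le_rfl
  sum_one := by
    rw [Fintype.sum_prod_type]
    simp only [cp_sum_right hp, hp.sum_one]

lemma cp_pos (c : A → γ) {z : A × A} (h : 0 < cp p c z) : c z.1 = c z.2 := by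
  by_contra hn
  simp [cp, hn] at h

/-- If `f` refines `c`, then given the second copy, the first copy of `f` has entropy `H(f | c)`. -/
lemma Hd_cp (hp : IsPW p) {β : Type*} (f : A → β) (c : A → γ) (hfc : ∀ a a', f a = f a' → c a = c a') :
    Hd (cp p c) (fun z => (f z.1, z.2)) - Hd (cp p c) (fun z => z.2) = Hd p f - Hd p c := by
  classical
  have h1 : ∀ z, 0 < cp p c z → pr (cp p c) (fun z => (f z.1, z.2)) z
      = pr p f z.1 * (p z.2 / pr p c z.1) := by
    rintro ⟨a, a'⟩ hz
    have hc : c a = c a' := cp_pos c hz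
    unfold pr
    rw [Fintype.sum_prod_type, Finset.sum_mul]
    refine Finset.sum_congr rfl fun a1 _ => ?_
    rw [Finset.sum_eq_single a']
    · by_cases h : f a1 = f a
      · have hc1 : c a1 = c a := hfc _ _ h
        simp only [h, if_true]
        simp only [cp, hc1, hc, if_true]
        rw [pr_eq_of_eq hc1, pr_eq_of_eq hc]
        change _ = p a1 * (p a' / pr p c a')
        ring
      · simp [h]
    · intro x _ hx
      simp [hx]
    · simp
  have h2 : ∀ z, pr (cp p c) (fun z => z.2) z = p z.2 := by
    rintro ⟨a, a'⟩
    unfold pr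
    rw [Fintype.sum_prod_type, ← cp_sum_left hp c a']
    refine Finset.sum_congr rfl fun a1 _ => ?_
    simp
  have hm : ∀ F : A → ℝ, ∑ z, cp p c z * F z.1 = ∑ a, p a * F a := by
    intro F
    rw [Fintype.sum_prod_type]
    refine Finset.sum_congr rfl fun a _ => ?_
    simp only
    rw [← Finset.sum_mul, cp_sum_right hp]
  unfold Hd
  rw [← hm, ← hm]
  simp only [← Finset.sum_sub_distrib]
  refine Finset.sum_congr rfl fun z _ => ?_
  rcases ((hp.cp c).nonneg z).eq_or_lt with h0 | h0
  · simp [← h0]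
  have p1 : 0 < p z.1 := by
    refine (hp.nonneg _).lt_of_ne fun h => ?_
    simp [cp, ← h] at h0
  have p2 : 0 < p z.2 := by
    refine (hp.nonneg _).lt_of_ne fun h => ?_
    simp [cp, ← h] at h0
  have q1 := pr_pos hp f p1
  have q2 := pr_pos hp c p1
  rw [h1 z h0, h2, Real.log_mul q1.ne' (div_pos p2 q2).ne', Real.log_div p2.ne' q2.ne']
  ring

open Classical in
/-- Conditional entropy across the `q` levels from `l` to `l - q` forces two copies of `X` sharing
their level-`l` cell to be at distance at least `b ^ (l - q)` with substantial probability: given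
the second copy, the level-`(l - q)` cell of the first one costs `log 6` nats when it is a neighbour
of the cell of the second, and `log 2 + q log b` otherwise. -/
lemma sep (hp : IsPW p) (b : ℕ) (hb : 2 ≤ b) (X : A → ℤ) (q l : ℕ) (hql : q ≤ l) :
    Hd p (fun a => X a / (b:ℤ) ^ (l - q)) - Hd p (fun a => X a / (b:ℤ) ^ l)
      ≤ Real.log 6 + (∑ z, cp p (fun a => X a / (b:ℤ) ^ l) z *
        (if ((b ^ (l - q) : ℕ) : ℤ) ≤ |X z.1 - X z.2| then 1 else 0)) *
          (Real.log 2 + q * Real.log b) := by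
  set f := fun a => X a / (b:ℤ) ^ (l - q)
  set c := fun a => X a / (b:ℤ) ^ l
  have hb0 : (0:ℤ) < b := by exact_mod_cast (by omega : 0 < b)
  have hb0' : (0:ℝ) < b := by exact_mod_cast (by omega : 0 < b)
  have hbq : (b:ℤ) ^ l = (b:ℤ) ^ (l - q) * (b:ℤ) ^ q := by rw [← pow_add, Nat.sub_add_cancel hql]
  have hcf : ∀ a, c a = f a / (b:ℤ) ^ q := by
    intro a
    simp only [c, f]
    rw [hbq, Int.ediv_ediv_of_nonneg (by positivity)]
  rw [← Hd_cp hp f c (fun a a' h => by rw [hcf, hcf, h])]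
  set ρ := cp p c
  have hρ : IsPW ρ := hp.cp c
  -- Half of the mass of the kernel is spread over the three cells nearest to that of the second
  -- copy, the other half over all `b ^ q` cells of level `l - q` in the common cell.
  set W : ℤ → A → ℝ := fun v a => (if |v - f a| ≤ 1 then 1 / 6 else 0) + 1 / 2 * ((b:ℝ) ^ q)⁻¹
  have hWp : ∀ v a, 1 / 2 * ((b:ℝ) ^ q)⁻¹ ≤ W v a := by
    intro v a
    simp only [W]
    split_ifs <;> norm_num
  have hWp0 : ∀ v a, 0 < W v a := fun v a => lt_of_lt_of_le (by positivity) (hWp v a)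
  have hWn : ∀ v a, |v - f a| ≤ 1 → 1 / 6 ≤ W v a := by
    intro v a h
    have : 0 < ((b:ℝ) ^ q)⁻¹ := by positivity
    simp only [W, h, if_true]
    linarith
  refine (Hd_cond_le hρ _ _ W (fun a => Finset.Ico (c a * (b:ℤ) ^ q) (c a * (b:ℤ) ^ q + b ^ q))
    ?_ (fun v a => (hWp0 v a).le) (fun z _ => hWp0 _ _) ?_).trans ?_
  · intro z hz
    have hc := cp_pos c hz
    rw [← hc, hcf]
    have h1 := Int.emod_add_mul_ediv (f z.1) ((b:ℤ) ^ q)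
    have h2 := Int.emod_nonneg (f z.1) (show (b:ℤ) ^ q ≠ 0 by positivity)
    have h3 := Int.emod_lt_of_pos (f z.1) (show 0 < (b:ℤ) ^ q by positivity)
    rw [Finset.mem_Ico]
    constructor <;> linarith
  · intro a
    simp only [W, Finset.sum_add_distrib]
    rw [Finset.sum_const, Int.card_Ico, ← Finset.sum_filter, Finset.sum_const]
    have h1 : (((c a * (b:ℤ) ^ q + b ^ q - c a * (b:ℤ) ^ q).toNat : ℕ) : ℝ) = (b:ℝ) ^ q := by
      rw [add_sub_cancel_left]
      exact_mod_cast congrArg (Int.cast : ℤ → ℝ) (Int.toNat_of_nonneg (show 0 ≤ (b:ℤ) ^ q by positivity))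
    have h2 : (Finset.filter (fun v => |v - f a| ≤ 1)
        (Finset.Ico (c a * (b:ℤ) ^ q) (c a * (b:ℤ) ^ q + b ^ q))).card ≤ 3 := by
      have : Finset.filter (fun v => |v - f a| ≤ 1)
        (Finset.Ico (c a * (b:ℤ) ^ q) (c a * (b:ℤ) ^ q + b ^ q)) ⊆ Finset.Icc (f a - 1) (f a + 1) := by
        intro v hv
        have := abs_le.1 (Finset.mem_filter.1 hv).2
        rw [Finset.mem_Icc]
        constructor <;> linarith
      refine (Finset.card_le_card this).trans ?_
      rw [Int.card_Icc]
      omega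
    have h3 : ((Finset.filter (fun v => |v - f a| ≤ 1)
        (Finset.Ico (c a * (b:ℤ) ^ q) (c a * (b:ℤ) ^ q + b ^ q))).card : ℝ) ≤ 3 := by
      exact_mod_cast h2
    rw [nsmul_eq_mul, nsmul_eq_mul, h1]
    have : (b:ℝ) ^ q * (1 / 2 * ((b:ℝ) ^ q)⁻¹) = 1 / 2 := by
      field_simp
    rw [this]
    linarith
  · have hstep : ∀ z, ρ z * -Real.log (W (f z.1) z.2) ≤ ρ z * Real.log 6 +
        ρ z * (if ((b ^ (l - q) : ℕ) : ℤ) ≤ |X z.1 - X z.2| then 1 else 0) *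
          (Real.log 2 + q * Real.log b) := by
      intro z
      rw [mul_assoc, ← mul_add]
      refine mul_le_mul_of_nonneg_left ?_ (hρ.nonneg z)
      have l6 : 0 ≤ Real.log 6 := Real.log_nonneg (by norm_num)
      by_cases h : ((b ^ (l - q) : ℕ) : ℤ) ≤ |X z.1 - X z.2|
      · rw [if_pos h]
        have := Real.log_le_log (by positivity) (hWp (f z.1) z.2)
        rw [Real.log_mul (by norm_num) (by positivity), Real.log_inv, Real.log_pow,
          one_div, Real.log_inv] at this
        linarith
      · rw [if_neg h]
        push Not at h
        push_cast at h
        have hn : |f z.1 - f z.2| ≤ 1 := by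
          have hD : 0 < (b:ℤ) ^ (l - q) := by positivity
          simp only [f]
          set Dd := (b:ℤ) ^ (l - q)
          have e1 := Int.emod_add_mul_ediv (X z.1) Dd
          have e2 := Int.emod_nonneg (X z.1) hD.ne'
          have e3 := Int.emod_lt_of_pos (X z.1) hD
          have e4 := Int.emod_add_mul_ediv (X z.2) Dd
          have e5 := Int.emod_nonneg (X z.2) hD.ne'
          have e6 := Int.emod_lt_of_pos (X z.2) hD
          rw [abs_lt] at h
          set u := X z.1 / Dd
          set v := X z.2 / Dd
          have h1 : Dd * (u - v) < Dd * 2 := by rw [mul_sub]; linarith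
          have h2 : Dd * (v - u) < Dd * 2 := by rw [mul_sub]; linarith
          have h1' := lt_of_mul_lt_mul_left h1 hD.le
          have h2' := lt_of_mul_lt_mul_left h2 hD.le
          rw [abs_le]
          constructor <;> omega
        have := Real.log_le_log (by norm_num) (hWn _ _ hn)
        rw [one_div, Real.log_inv] at this
        linarith
    refine (Finset.sum_le_sum fun z _ => hstep z).trans_eq ?_
    rw [Finset.sum_add_distrib, ← Finset.sum_mul, ← Finset.sum_mul, hρ.sum_one, one_mul]

end cplib

/-! ### Collision probabilities -/

section good
variable {A B γ : Type*} [Fintype A] [Fintype B] {p : A → ℝ} {q : B → ℝ}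

lemma pr_pw (c : A → γ) (N : ℕ) (x : Fin N → A) :
    pr (pw p N) (fun x j => c (x j)) x = ∏ j, pr p c (x j) := by
  classical
  unfold pr
  rw [Finset.prod_univ_sum, Fintype.piFinset_univ]
  refine Finset.sum_congr rfl fun x' _ => ?_
  rw [Finset.prod_ite_zero]
  simp [funext_iff, pw]

lemma pw_cp (c : A → γ) (N : ℕ) (x x' : Fin N → A) [Decidable (∀ j, c (x j) = c (x' j))] :
    pw (cp p c) N (fun j => (x j, x' j)) =
      if ∀ j, c (x j) = c (x' j) then pw p N x * pw p N x' / ∏ j, pr p c (x j) else 0 := by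
  classical
  unfold pw cp
  rw [Finset.prod_ite_zero]
  simp [Finset.prod_div_distrib, Finset.prod_mul_distrib]

lemma pr_id (q : B → ℝ) (y : B) : pr q (fun y => y) y = q y := by
  classical
  unfold pr
  rw [Finset.sum_eq_single y] <;> simp +contextual

lemma abs_sub_lt_of_ediv_eq' {a c D : ℤ} (hD : 0 < D) (h : a / D = c / D) : |a - c| < D := by
  have e1 := Int.emod_add_mul_ediv a D
  have e2 := Int.emod_nonneg a hD.ne'
  have e3 := Int.emod_lt_of_pos a hD
  have e4 := Int.emod_add_mul_ediv c D
  have e5 := Int.emod_nonneg c hD.ne'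
  have e6 := Int.emod_lt_of_pos c hD
  rw [h] at e1
  rw [abs_lt]
  constructor <;> linarith

open Classical in
/-- The mean conditional probability of the cell of side `D` containing `Y + ∑ X_j`, given `Y` and
the values `c_j`, is at most the probability that two copies of `∑ X_j`, independent given the
`c_j`, differ by less than `D`: two sums in the same cell differ by less than `D`. -/
lemma collide (hp : IsPW p) (hq : IsPW q) (X : A → ℤ) (Y : B → ℤ) (N : ℕ) (c : A → γ) (D : ℕ)
    (hD : 0 < D) :
    ∑ z : B × (Fin N → A), q z.1 * pw p N z.2 *
      (pr (fun z : B × (Fin N → A) => q z.1 * pw p N z.2)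
          (fun z => ((Y z.1 + ∑ j, X (z.2 j)) / (D:ℤ), (z.1, fun j => c (z.2 j)))) z
        / pr (fun z : B × (Fin N → A) => q z.1 * pw p N z.2)
          (fun z => (z.1, fun j => c (z.2 j))) z)
      ≤ ∑ x, pw (cp p c) N x * (if |∑ j, (X (x j).1 - X (x j).2)| < (D:ℤ) then 1 else 0) := by
  have key : ∀ z : B × (Fin N → A), q z.1 * pw p N z.2 *
      (pr (fun z : B × (Fin N → A) => q z.1 * pw p N z.2)
          (fun z => ((Y z.1 + ∑ j, X (z.2 j)) / (D:ℤ), (z.1, fun j => c (z.2 j)))) z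
        / pr (fun z : B × (Fin N → A) => q z.1 * pw p N z.2)
          (fun z => (z.1, fun j => c (z.2 j))) z)
      ≤ q z.1 * ∑ x' : Fin N → A, pw (cp p c) N (fun j => (z.2 j, x' j)) *
        (if |∑ j, (X (z.2 j) - X (x' j))| < (D:ℤ) then 1 else 0) := by
    rintro ⟨y, x⟩
    have hg := pr_prod (p := q) (p' := pw p N) (fun y => y) (fun x j => c (x j)) (y, x)
    rw [pr_id, pr_pw] at hg
    rw [hg]
    dsimp only
    have hnum : pr (fun z : B × (Fin N → A) => q z.1 * pw p N z.2)
          (fun z => ((Y z.1 + ∑ j, X (z.2 j)) / (D:ℤ), (z.1, fun j => c (z.2 j)))) (y, x)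
        ≤ ∑ x', if ∀ j, c (x j) = c (x' j) then q y * pw p N x' *
          (if |∑ j, (X (x j) - X (x' j))| < (D:ℤ) then 1 else 0) else 0 := by
      unfold pr
      rw [Fintype.sum_prod_type, Finset.sum_eq_single y]
      · refine Finset.sum_le_sum fun x' _ => ?_
        by_cases h : (Y y + ∑ j, X (x' j)) / (D:ℤ) = (Y y + ∑ j, X (x j)) / (D:ℤ) ∧
          ∀ j, c (x j) = c (x' j)
        · have h1 : |∑ j, (X (x j) - X (x' j))| < (D:ℤ) := by
            have := abs_sub_lt_of_ediv_eq' (by exact_mod_cast hD) h.1.symm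
            rw [Finset.sum_sub_distrib]
            rwa [add_sub_add_left_eq_sub] at this
          rw [if_pos h.2, if_pos h1, mul_one]
          split_ifs
          · exact le_rfl
          · exact mul_nonneg (hq.nonneg y) ((hp.pw N).nonneg x')
        · have : ¬ (((Y y + ∑ j, X (x' j)) / (D:ℤ), (y, fun j => c (x' j)))
              = ((Y y + ∑ j, X (x j)) / (D:ℤ), (y, fun j => c (x j)))) := by
            intro h'
            simp only [Prod.mk.injEq, true_and, funext_iff] at h'
            exact h ⟨h'.1, fun j => (h'.2 j).symm⟩
          dsimp only
          rw [if_neg this]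
          have := mul_nonneg (hq.nonneg y) ((hp.pw N).nonneg x')
          split_ifs <;> simp [this]
      · intro y' _ hy'
        simp [hy']
      · simp
    rcases (hq.nonneg y).eq_or_lt with h0 | h0
    · simp [← h0]
    rcases ((hp.pw N).nonneg x).eq_or_lt with h1 | h1
    · rw [← h1, mul_zero, zero_mul]
      refine mul_nonneg h0.le (Finset.sum_nonneg fun x' _ => mul_nonneg (((hp.cp c).pw N).nonneg _) ?_)
      split_ifs <;> norm_num
    have hR : 0 < ∏ j, pr p c (x j) := by
      rw [← pr_pw]; exact pr_pos (hp.pw N) _ h1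
    calc _ ≤ q y * pw p N x * ((∑ x', if ∀ j, c (x j) = c (x' j) then q y * pw p N x' *
          (if |∑ j, (X (x j) - X (x' j))| < (D:ℤ) then 1 else 0) else 0)
          / (q y * ∏ j, pr p c (x j))) := by
          gcongr
      _ = _ := by
          rw [← mul_div_assoc, mul_assoc, mul_div_mul_left _ _ h0.ne', Finset.mul_sum, Finset.mul_sum,
            Finset.sum_div]
          refine Finset.sum_congr rfl fun x' _ => ?_
          rw [pw_cp]
          by_cases h : ∀ j, c (x j) = c (x' j)
          · rw [if_pos h, if_pos h]; ring
          · rw [if_neg h, if_neg h]; simp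
  refine (Finset.sum_le_sum fun z _ => key z).trans_eq ?_
  rw [Fintype.sum_prod_type]
  simp only
  rw [← Finset.sum_mul_sum, hq.sum_one, one_mul,
    ← (Equiv.arrowProdEquivProdArrow (Fin N) (fun _ => A) (fun _ => A)).symm.sum_comp, Fintype.sum_prod_type]
  rfl

end good

/-! ### Entropy of the iterated sum across a block of levels -/

lemma geo_nat (V : Finset ℤ) (h : ℤ) (hinj : Set.InjOn (fun v : ℤ => (v - h).natAbs) V) :
    ∑ v ∈ V, (1 / 2 : ℝ) ^ (v - h).natAbs ≤ 2 := by
  rw [← Finset.sum_image (f := fun n : ℕ => (1 / 2 : ℝ) ^ n) hinj]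
  refine le_trans (Finset.sum_le_sum_of_subset_of_nonneg (Finset.subset_range_sup_succ _)
    fun _ _ _ => by positivity) (sum_geometric_two_le _)

lemma geo_int (V : Finset ℤ) (h : ℤ) : ∑ v ∈ V, (1 / 2 : ℝ) ^ (v - h).natAbs ≤ 4 := by
  classical
  rw [← Finset.sum_filter_add_sum_filter_not V (fun v => h ≤ v)]
  have h1 := geo_nat (V.filter fun v => h ≤ v) h (by
    intro a ha c hc hac
    have := (Finset.mem_filter.1 ha).2
    have := (Finset.mem_filter.1 hc).2
    simp only at hac
    omega)
  have h2 := geo_nat (V.filter fun v => ¬ h ≤ v) h (by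
    intro a ha c hc hac
    have := (Finset.mem_filter.1 ha).2
    have := (Finset.mem_filter.1 hc).2
    simp only at hac
    omega)
  linarith

section good
variable {A B γ : Type*} [Fintype A] [Fintype B] {p : A → ℝ} {q : B → ℝ}

/-- Given `Y` and the cells of side `D` containing the `N ≤ S ^ 2` variables `X_j`, the cell of side
`D * S` containing `Y + ∑ X_j` carries at most `4 log 2` nats. Indeed the remainders `X_j % D` are
independent with standard deviation at most `D`, so their sum fluctuates by `D * √N ≤ D * S`. -/
lemma coarse (hp : IsPW p) (hq : IsPW q) (X : A → ℤ) (Y : B → ℤ) (N D S : ℕ) (hD : 0 < D)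
    (hS : 0 < S) (hN : N ≤ S ^ 2) :
    Hd (fun z : B × (Fin N → A) => q z.1 * pw p N z.2)
        (fun z => ((Y z.1 + ∑ j, X (z.2 j)) / ((D * S : ℕ) : ℤ), (z.1, fun j => X (z.2 j) / (D:ℤ))))
      - Hd (fun z : B × (Fin N → A) => q z.1 * pw p N z.2)
        (fun z => (z.1, fun j => X (z.2 j) / (D:ℤ))) ≤ 4 * Real.log 2 := by
  classical
  set P := fun z : B × (Fin N → A) => q z.1 * pw p N z.2
  have hP : IsPW P := hq.prod (hp.pw N)
  set f := fun z : B × (Fin N → A) => (Y z.1 + ∑ j, X (z.2 j)) / ((D * S : ℕ) : ℤ)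
  set κ : ℝ := ∑ a, p a * ((X a % (D:ℤ) : ℤ) : ℝ)
  set G : A → ℝ := fun a => ((X a % (D:ℤ) : ℤ) : ℝ) - κ
  have hDS : (0:ℝ) < D * S := by positivity
  have hDr : (0:ℝ) < D := by positivity
  have hDi : (0:ℤ) < D := by positivity
  have hmod : ∀ a, 0 ≤ ((X a % (D:ℤ) : ℤ) : ℝ) ∧ ((X a % (D:ℤ) : ℤ) : ℝ) ≤ D := fun a =>
    ⟨by exact_mod_cast Int.emod_nonneg _ hDi.ne', by exact_mod_cast (Int.emod_lt_of_pos _ hDi).le⟩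
  have hκ0 : 0 ≤ κ := Finset.sum_nonneg fun a _ => mul_nonneg (hp.nonneg a) (hmod a).1
  have hκ1 : κ ≤ D := by
    calc κ ≤ ∑ a, p a * (D:ℝ) :=
          Finset.sum_le_sum fun a _ => mul_le_mul_of_nonneg_left (hmod a).2 (hp.nonneg a)
      _ = D := by rw [← Finset.sum_mul, hp.sum_one, one_mul]
  have hG0 : ∑ a, p a * G a = 0 := by
    simp only [G, mul_sub, Finset.sum_sub_distrib, ← Finset.sum_mul, hp.sum_one]
    simp [κ]
  have hG2 : ∑ a, p a * G a ^ 2 ≤ (D:ℝ) ^ 2 := by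
    calc _ ≤ ∑ a, p a * (D:ℝ) ^ 2 := by
          refine Finset.sum_le_sum fun a _ => mul_le_mul_of_nonneg_left ?_ (hp.nonneg a)
          rw [sq_le_sq, abs_of_pos hDr, abs_le]
          have := hmod a
          simp only [G]
          constructor <;> linarith
      _ = _ := by rw [← Finset.sum_mul, hp.sum_one, one_mul]
  set h : B × (Fin N → ℤ) → ℤ := fun y =>
    ⌊((Y y.1 : ℝ) + ∑ j, (D:ℝ) * (y.2 j : ℝ) + N * κ) / (D * S)⌋
  -- A kernel with geometric tails about the cell `h` predicted by replacing remainders with their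
  -- mean `κ`; its cross-entropy is controlled by the mean distance of `f` to `h`.
  set W : ℤ → B × (Fin N → ℤ) → ℝ := fun v y => 1 / 4 * (1 / 2 : ℝ) ^ (v - h y).natAbs
  have hfh : ∀ z : B × (Fin N → A), |((f z - h (z.1, fun j => X (z.2 j) / (D:ℤ)) : ℤ) : ℝ)|
      ≤ ((∑ j, G (z.2 j)) ^ 2 / (D * S) ^ 2 + 1) / 2 + 1 := by
    rintro ⟨y, x⟩
    set T := ∑ j, G (x j)
    set u : ℝ := ((Y y : ℝ) + ∑ j, (D:ℝ) * ((X (x j) / (D:ℤ) : ℤ) : ℝ) + N * κ) / (D * S) with hu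
    have hh : h (y, fun j => X (x j) / (D:ℤ)) = ⌊u⌋ := rfl
    have hZ : ((Y y + ∑ j, X (x j) : ℤ) : ℝ) = u * (D * S) + T := by
      rw [hu, div_mul_cancel₀ _ hDS.ne']
      have : ∀ j, (X (x j) : ℝ) = (D:ℝ) * ((X (x j) / (D:ℤ) : ℤ) : ℝ) + κ + G (x j) := by
        intro j
        have := Int.emod_add_mul_ediv (X (x j)) D
        have : ((X (x j) % D : ℤ) : ℝ) + (D:ℝ) * ((X (x j) / (D:ℤ) : ℤ) : ℝ) = X (x j) := by
          exact_mod_cast this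
        simp only [G]
        linarith
      push_cast
      rw [Finset.sum_congr rfl fun j _ => this j]
      simp only [Finset.sum_add_distrib, T]
      simp
      ring
    have hDSi : (0:ℤ) < ((D * S : ℕ) : ℤ) := by positivity
    have e1 : ((f (y, x) : ℤ) : ℝ) * (D * S) ≤ u * (D * S) + T := by
      rw [← hZ]
      exact_mod_cast Int.ediv_mul_le (Y y + ∑ j, X (x j)) hDSi.ne'
    have e2 : u * (D * S) + T < ((f (y, x) : ℤ) + 1 : ℝ) * (D * S) := by
      rw [← hZ]
      exact_mod_cast Int.lt_ediv_add_one_mul_self (Y y + ∑ j, X (x j)) hDSi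
    have e3 := Int.floor_le u
    have e4 := Int.lt_floor_add_one u
    rw [hh]
    set t := T / (D * S) with ht
    have hT : T = t * (D * S) := by rw [ht, div_mul_cancel₀ _ hDS.ne']
    rw [hT, ← add_mul] at e1 e2
    have e1' := le_of_mul_le_mul_right e1 hDS
    have e2' := lt_of_mul_lt_mul_right e2 hDS.le
    rw [← div_pow, ← ht]
    have : |t| ≤ (t ^ 2 + 1) / 2 := by
      have := sq_nonneg (|t| - 1)
      rw [← sq_abs t]; nlinarith
    have hta := le_abs_self t
    have hta' := neg_abs_le t
    push_cast
    rw [abs_le]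
    constructor <;> linarith
  have hmain := Hd_cond_le hP f (fun z => (z.1, fun j => X (z.2 j) / (D:ℤ))) W
    (fun _ => Finset.univ.image f) (fun z _ => Finset.mem_image_of_mem _ (Finset.mem_univ _))
    (fun v y => by positivity) (fun z _ => by positivity) (fun y => by
      simp only [W]
      rw [← Finset.mul_sum]
      have := geo_int (Finset.univ.image f) (h y)
      linarith)
  refine hmain.trans ?_
  have l2 : 0 ≤ Real.log 2 := Real.log_nonneg (by norm_num)
  have hl : ∀ z : B × (Fin N → A), -Real.log (W (f z) (z.1, fun j => X (z.2 j) / (D:ℤ)))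
      ≤ 2 * Real.log 2 + (((∑ j, G (z.2 j)) ^ 2 / (D * S) ^ 2 + 1) / 2 + 1) * Real.log 2 := by
    intro z
    simp only [W]
    rw [Real.log_mul (by norm_num) (by positivity), Real.log_pow, one_div, one_div, Real.log_inv,
      Real.log_inv, show (4:ℝ) = 2 ^ 2 by norm_num, Real.log_pow]
    have h1 := mul_le_mul_of_nonneg_right (hfh z) l2
    rw [← Int.cast_abs, Int.abs_eq_natAbs, Int.cast_natCast] at h1
    push_cast
    linarith
  refine (Finset.sum_le_sum fun z _ => mul_le_mul_of_nonneg_left (hl z) (hP.nonneg z)).trans ?_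
  have hE : ∑ z, P z * (∑ j, G (z.2 j)) ^ 2 ≤ (D * S) ^ 2 := by
    have : ∑ z, P z * (∑ j, G (z.2 j)) ^ 2 = ∑ x, pw p N x * (∑ j, G (x j)) ^ 2 := by
      rw [Fintype.sum_prod_type, Finset.sum_comm]
      refine Finset.sum_congr rfl fun x _ => ?_
      simp only [P]
      rw [← Finset.sum_mul, ← Finset.sum_mul, hq.sum_one, one_mul]
    rw [this, pw_second_moment hp G hG0]
    have hN' : (N:ℝ) ≤ (S:ℝ) ^ 2 := by exact_mod_cast hN
    calc (N:ℝ) * ∑ a, p a * G a ^ 2 ≤ (S:ℝ) ^ 2 * (D:ℝ) ^ 2 :=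
          mul_le_mul hN' hG2 (Finset.sum_nonneg fun a _ => mul_nonneg (hp.nonneg a) (sq_nonneg _))
            (by positivity)
      _ = _ := by ring
  have e : ∑ z, P z * (2 * Real.log 2 + (((∑ j, G (z.2 j)) ^ 2 / (D * S) ^ 2 + 1) / 2 + 1) * Real.log 2)
      = (2 * Real.log 2 + 3 / 2 * Real.log 2) * (∑ z, P z)
        + Real.log 2 / 2 * ((∑ z, P z * (∑ j, G (z.2 j)) ^ 2) / (D * S) ^ 2) := by
    rw [Finset.sum_div, Finset.mul_sum, Finset.mul_sum, ← Finset.sum_add_distrib]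
    refine Finset.sum_congr rfl fun z _ => by ring
  rw [e, hP.sum_one]
  have : (∑ z, P z * (∑ j, G (z.2 j)) ^ 2) / ((D:ℝ) * S) ^ 2 ≤ 1 := by
    rw [div_le_one (by positivity)]; exact hE
  nlinarith

open Classical in
/-- If `X` has entropy at least `η s log b` across the levels `l - s` to `l`, then the sum of `Y` and
`b ^ (2 * M)` copies of `X` has entropy `M log b - O(1)` across the levels `l` to `l + M`, which is
nearly the maximum: knowing the level-`l` cells of the `X_j` determines the sum at level `l + M`
up to bounded entropy (`coarse`), while at level `l` the sum still has entropy about `M log b` by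
the small-ball estimate. -/
lemma good_block (hp : IsPW p) (hq : IsPW q) (X : A → ℤ) (Y : B → ℤ) (b : ℕ) (hb : 2 ≤ b)
    (s M l : ℕ) (hs : 1 ≤ s) (hsl : s ≤ l) (η : ℝ) (hη : 0 < η)
    (h6 : Real.log 6 ≤ η / 2 * s * Real.log b)
    (h : η * s * Real.log b ≤ Hd p (fun a => X a / (b:ℤ) ^ (l - s)) - Hd p (fun a => X a / (b:ℤ) ^ l)) :
    M * Real.log b - (Real.log (b ^ s / Real.sqrt (η / 8) + 16 / η) + 4 * Real.log 2) ≤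
      Hd (fun z : B × (Fin (b ^ (2 * M)) → A) => q z.1 * pw p _ z.2)
        (fun z => (Y z.1 + ∑ j, X (z.2 j)) / (b:ℤ) ^ l) -
      Hd (fun z : B × (Fin (b ^ (2 * M)) → A) => q z.1 * pw p _ z.2)
        (fun z => (Y z.1 + ∑ j, X (z.2 j)) / (b:ℤ) ^ (l + M)) := by
  have hb0 : 0 < b := by omega
  have hL : 0 < Real.log b := Real.log_pos (by exact_mod_cast (by omega : 1 < b))
  have hL2 : Real.log 2 ≤ Real.log b := Real.log_le_log (by norm_num) (by exact_mod_cast hb)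
  set N := b ^ (2 * M) with hN
  set P := fun z : B × (Fin N → A) => q z.1 * pw p N z.2
  have hP : IsPW P := hq.prod (hp.pw N)
  set Z := fun z : B × (Fin N → A) => Y z.1 + ∑ j, X (z.2 j)
  set c := fun a => X a / (b:ℤ) ^ l
  set g := fun z : B × (Fin N → A) => (z.1, fun j => c (z.2 j))
  set κ := ∑ z, cp p c z * (if ((b ^ (l - s) : ℕ) : ℤ) ≤ |X z.1 - X z.2| then 1 else 0) with hκd
  have hκ : η / 4 ≤ κ := by
    have h1 := h.trans (sep hp b hb X s l hsl)
    have hs' : (1:ℝ) ≤ s := by exact_mod_cast hs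
    have hκ0 : 0 ≤ κ := Finset.sum_nonneg fun z _ => mul_nonneg ((hp.cp c).nonneg z) (by split_ifs <;> norm_num)
    have hsL : Real.log b ≤ s * Real.log b := le_mul_of_one_le_left hL.le hs'
    have h2 : κ * (Real.log 2 + s * Real.log b) ≤ κ * (2 * (s * Real.log b)) :=
      mul_le_mul_of_nonneg_left (by linarith) hκ0
    have h3 : η / 4 * (2 * (s * Real.log b)) ≤ κ * (2 * (s * Real.log b)) := by
      change _ ≤ Real.log 6 + κ * _ at h1
      linarith
    exact le_of_mul_le_mul_right h3 (by nlinarith)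
  have hκ0 : 0 < κ := by linarith
  have hfine : M * Real.log b - Real.log (b ^ s / Real.sqrt (η / 8) + 16 / η) ≤
      Hd P (fun z => (Z z / (b:ℤ) ^ l, g z)) - Hd P g := by
    have hc := collide hp hq X Y N c (b ^ l) (by positivity)
    have hlo := lo_prob (hp.cp c) (Equiv.prodComm A A) (fun z => cp_swap c _ _)
      (fun z => X z.1 - X z.2) (fun z => by simp) (b ^ (l - s)) (b ^ s) N (by positivity)
      (by positivity) κ hκ0 hκd.symm
    rw [← pow_add, show s + (l - s) = l by omega] at hlo
    have hbM : (0:ℝ) < (b:ℝ) ^ M := by positivity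
    have hbound : ((b ^ s : ℕ) : ℝ) / Real.sqrt (N * κ / 2) + 4 / (N * κ)
        ≤ (b ^ s / Real.sqrt (η / 8) + 16 / η) / (b:ℝ) ^ M := by
      have hNr : (N:ℝ) = ((b:ℝ) ^ M) ^ 2 := by rw [hN]; push_cast; ring
      have h1b : 1 ≤ (b:ℝ) ^ M := one_le_pow₀ (by exact_mod_cast hb0)
      rw [add_div, hNr, div_div, div_div]
      have e1 : Real.sqrt (η / 8) * (b:ℝ) ^ M ≤ Real.sqrt (((b:ℝ) ^ M) ^ 2 * κ / 2) := by
        apply Real.le_sqrt_of_sq_le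
        rw [mul_pow, Real.sq_sqrt (by positivity)]
        nlinarith [sq_nonneg ((b:ℝ) ^ M)]
      have e2 : (4:ℝ) / (((b:ℝ) ^ M) ^ 2 * κ) ≤ 16 / (η * (b:ℝ) ^ M) := by
        rw [div_le_div_iff₀ (by positivity) (by positivity)]
        have : η * (b:ℝ) ^ M ≤ 4 * κ * ((b:ℝ) ^ M) ^ 2 :=
          mul_le_mul (by linarith) (by nlinarith) hbM.le (by linarith)
        linarith
      have hpos : 0 < Real.sqrt (η / 8) := Real.sqrt_pos.2 (by positivity)
      refine add_le_add ?_ e2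
      push_cast
      exact div_le_div_of_nonneg_left (by positivity) (by positivity) e1
    have hfin := (hc.trans hlo).trans hbound
    have hpos : 0 < Real.sqrt (η / 8) := Real.sqrt_pos.2 (by positivity)
    have := Hd_cond_ge hP (fun z => Z z / ((b ^ l : ℕ) : ℤ)) g _ (by positivity) hfin
    rw [Real.log_div (by positivity) (by positivity), Real.log_pow] at this
    push_cast at this
    linarith
  have hco := coarse hp hq X Y N (b ^ l) (b ^ M) (by positivity) (by positivity)
    (by rw [hN, ← pow_mul, mul_comm])
  rw [← pow_add] at hco
  push_cast at hco
  change Hd P (fun z => (Z z / (b:ℤ) ^ (l + M), g z)) - Hd P g ≤ _ at hco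
  have hsub := Hd_submod hP (fun z => Z z / (b:ℤ) ^ l) g (fun z => Z z / (b:ℤ) ^ (l + M))
  have hb' : (0:ℤ) < b := by exact_mod_cast hb0
  have hdet : ∀ z, Z z / (b:ℤ) ^ (l + M) = Z z / (b:ℤ) ^ l / (b:ℤ) ^ M := by
    intro z
    rw [Int.ediv_ediv_of_nonneg (by positivity), pow_add]
  have r1 : Hd P (fun z => (Z z / (b:ℤ) ^ l, Z z / (b:ℤ) ^ (l + M))) = Hd P (fun z => Z z / (b:ℤ) ^ l) := by
    refine Hd_congr fun a a' => ?_
    simp only [Prod.mk.injEq]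
    exact ⟨fun h => h.1, fun h => ⟨h, by rw [hdet, hdet, h]⟩⟩
  have r2 : Hd P (fun z => (g z, Z z / (b:ℤ) ^ (l + M))) = Hd P (fun z => (Z z / (b:ℤ) ^ (l + M), g z)) := by
    refine Hd_congr fun a a' => ?_
    simp only [Prod.mk.injEq]
    tauto
  have r3 : Hd P (fun z => (Z z / (b:ℤ) ^ l, g z))
      ≤ Hd P (fun z => (Z z / (b:ℤ) ^ l, g z, Z z / (b:ℤ) ^ (l + M))) := by
    refine Hd_mono hP fun a a' => ?_
    simp only [Prod.mk.injEq]
    tauto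
  linarith

/-- Across any block of levels, `Y + ∑ X_j` has at least as much entropy as `Y`, up to `2 log 2`:
condition on all of the `X_j`, which turns the sum into a translate of `Y`. -/
lemma bad_block (hp : IsPW p) (hq : IsPW q) (X : A → ℤ) (Y : B → ℤ) (b : ℕ) (hb : 2 ≤ b)
    (N M l : ℕ) :
    Hd q (fun y => Y y / (b:ℤ) ^ l) - Hd q (fun y => Y y / (b:ℤ) ^ (l + M)) - 2 * Real.log 2 ≤
      Hd (fun z : B × (Fin N → A) => q z.1 * pw p N z.2)
        (fun z => (Y z.1 + ∑ j, X (z.2 j)) / (b:ℤ) ^ l) -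
      Hd (fun z : B × (Fin N → A) => q z.1 * pw p N z.2)
        (fun z => (Y z.1 + ∑ j, X (z.2 j)) / (b:ℤ) ^ (l + M)) := by
  classical
  have hb0 : (0:ℤ) < b := by exact_mod_cast (by omega : 0 < b)
  set P := fun z : B × (Fin N → A) => q z.1 * pw p N z.2
  have hP : IsPW P := hq.prod (hp.pw N)
  set Z := fun z : B × (Fin N → A) => Y z.1 + ∑ j, X (z.2 j)
  set HX := Hd (pw p N) (fun x => x)
  -- `(a + t) / D` takes one of two values once `a / D` and `t / D` are known.
  have two : ∀ (D a t : ℤ), 0 < D → (a + t) / D = a / D + t / D ∨ (a + t) / D = a / D + t / D + 1 := by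
    intro D a t hD
    have e1 := Int.emod_add_mul_ediv a D
    have e2 := Int.emod_nonneg a hD.ne'
    have e3 := Int.emod_lt_of_pos a hD
    have e4 := Int.emod_add_mul_ediv t D
    have e5 := Int.emod_nonneg t hD.ne'
    have e6 := Int.emod_lt_of_pos t hD
    rcases lt_or_ge (a % D + t % D) D with h | h
    · left
      rw [Int.ediv_eq_iff_of_pos hD]
      constructor <;> nlinarith
    · right
      rw [Int.ediv_eq_iff_of_pos hD]
      constructor <;> nlinarith
  have up : ∀ j : ℕ, Hd P (fun z => (Z z / (b:ℤ) ^ j, (Y z.1 / (b:ℤ) ^ j, z.2)))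
      ≤ Hd q (fun y => Y y / (b:ℤ) ^ j) + HX + Real.log 2 := by
    intro j
    have h1 := Hd_cond_card hP (fun z => Z z / (b:ℤ) ^ j) (fun z => (Y z.1 / (b:ℤ) ^ j, z.2))
      (fun y => {y.1 + (∑ i, X (y.2 i)) / (b:ℤ) ^ j, y.1 + (∑ i, X (y.2 i)) / (b:ℤ) ^ j + 1}) 2
      (by norm_num) (fun z => by
        have := two ((b:ℤ) ^ j) (Y z.1) (∑ i, X (z.2 i)) (by positivity)
        simpa [Z] using this) (fun y => Finset.card_le_two)
    have h2 := Hd_prod hq (hp.pw N) (fun y => Y y / (b:ℤ) ^ j) (fun x => x)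
    change Hd P _ = _ at h2
    rw [h2] at h1
    exact_mod_cast h1
  have lo : ∀ j i : ℕ, Hd q (fun y => Y y / (b:ℤ) ^ j) + HX ≤
      Hd P (fun z => (Z z / (b:ℤ) ^ j, (Y z.1 / (b:ℤ) ^ i, z.2))) + Real.log 2 := by
    intro j i
    have h1 := Hd_cond_card hP (fun z => Y z.1 / (b:ℤ) ^ j)
      (fun z => (Z z / (b:ℤ) ^ j, (Y z.1 / (b:ℤ) ^ i, z.2)))
      (fun y => {y.1 - (∑ i, X (y.2.2 i)) / (b:ℤ) ^ j, y.1 - (∑ i, X (y.2.2 i)) / (b:ℤ) ^ j - 1}) 2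
      (by norm_num) (fun z => by
        have := two ((b:ℤ) ^ j) (Y z.1) (∑ i, X (z.2 i)) (by positivity)
        simp only [Z, Finset.mem_insert, Finset.mem_singleton]
        omega) (fun y => Finset.card_le_two)
    have h2 := Hd_prod hq (hp.pw N) (fun y => Y y / (b:ℤ) ^ j) (fun x => x)
    change Hd P _ = _ at h2
    have h3 : Hd P (fun z => (Y z.1 / (b:ℤ) ^ j, z.2)) ≤ Hd P (fun z => (Y z.1 / (b:ℤ) ^ j,
        (Z z / (b:ℤ) ^ j, (Y z.1 / (b:ℤ) ^ i, z.2)))) := by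
      refine Hd_mono hP fun a a' => ?_
      simp only [Prod.mk.injEq]
      tauto
    rw [h2] at h3
    push_cast at h1
    linarith
  have hsub := Hd_submod hP (fun z => Z z / (b:ℤ) ^ l) (fun z => (Y z.1 / (b:ℤ) ^ (l + M), z.2))
    (fun z => Z z / (b:ℤ) ^ (l + M))
  have hdet : ∀ z, Z z / (b:ℤ) ^ (l + M) = Z z / (b:ℤ) ^ l / (b:ℤ) ^ M := by
    intro z
    rw [Int.ediv_ediv_of_nonneg (by positivity), pow_add]
  have r1 : Hd P (fun z => (Z z / (b:ℤ) ^ l, Z z / (b:ℤ) ^ (l + M))) = Hd P (fun z => Z z / (b:ℤ) ^ l) := by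
    refine Hd_congr fun a a' => ?_
    simp only [Prod.mk.injEq]
    exact ⟨fun h => h.1, fun h => ⟨h, by rw [hdet, hdet, h]⟩⟩
  have r2 : Hd P (fun z => ((Y z.1 / (b:ℤ) ^ (l + M), z.2), Z z / (b:ℤ) ^ (l + M)))
      = Hd P (fun z => (Z z / (b:ℤ) ^ (l + M), (Y z.1 / (b:ℤ) ^ (l + M), z.2))) := by
    refine Hd_congr fun a a' => ?_
    simp only [Prod.mk.injEq]
    tauto
  have r3 : Hd P (fun z => (Z z / (b:ℤ) ^ l, (Y z.1 / (b:ℤ) ^ (l + M), z.2)))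
      ≤ Hd P (fun z => (Z z / (b:ℤ) ^ l, (Y z.1 / (b:ℤ) ^ (l + M), z.2), Z z / (b:ℤ) ^ (l + M))) := by
    refine Hd_mono hP fun a a' => ?_
    simp only [Prod.mk.injEq]
    tauto
  have u := up (l + M)
  have v := lo l (l + M)
  linarith

end good

/-! ### Summation over scales -/

lemma tele (f : ℕ → ℝ) (n M : ℕ) :
    ∑ l ∈ Finset.range n, (f l - f (l + M)) = ∑ i ∈ Finset.range M, (f i - f (i + n)) := by
  have h1 := Finset.sum_range_add f n M
  have h2 := Finset.sum_range_add f M n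
  rw [add_comm M n, h1] at h2
  simp only [Finset.sum_sub_distrib]
  simp only [add_comm _ M, add_comm _ n]
  linarith

/-- Entropy profiles: `h j` stands for the entropy of a variable at scale `b ^ j`, so it is nonnegative
and decreases by at most `L` at each step as `j` grows and the partition gets coarser. -/
structure Lip (L : ℝ) (h : ℕ → ℝ) : Prop where
  nonneg : ∀ j, 0 ≤ h j
  anti : ∀ j t, h (j + t) ≤ h j
  lip : ∀ j t, h j ≤ h (j + t) + t * L

/-- The increments of `h` over the blocks of length `M` starting in a window of length `n` sum up to
about `M` times the increment over the window. -/
lemma tele_lower {L : ℝ} (hL : 0 ≤ L) {h : ℕ → ℝ} (hh : Lip L h) (l n M e : ℕ) :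
    M * (h l - h (l + (n + e)) - (M + e) * L) ≤ ∑ t ∈ Finset.range n, (h (l + t) - h (l + (t + M))) := by
  rw [tele (fun t => h (l + t)) n M]
  calc _ = ∑ i ∈ Finset.range M, (h l - h (l + (n + e)) - (M + e) * L) := by
        rw [Finset.sum_const, Finset.card_range, nsmul_eq_mul]
    _ ≤ _ := by
      refine Finset.sum_le_sum fun i hi => ?_
      have hi' : (i:ℝ) ≤ M := by exact_mod_cast (Finset.mem_range.1 hi).le
      have h1 := hh.lip l i
      have h2 := hh.lip (l + n) e
      have h3 := hh.anti (l + n) i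
      have h4 : (i:ℝ) * L ≤ M * L := mul_le_mul_of_nonneg_right hi' hL
      rw [show l + n + e = l + (n + e) by ring] at h2
      rw [show l + n + i = l + (i + n) by ring] at h3
      linarith

set_option maxHeartbeats 1000000 in
/-- Summation over scales. The blocks of length `M` starting at `l = 0, …, k - M` cover each level
about `M` times, so `M * hZ 0` and `M * hY 0` are compared with the sums of the increments over these
blocks. The profile `hX`, which exceeds `ε k L` at level `0`, drops by `ε s L / 8` across the `s`
levels below `l` for at least about `(7 / 8) ε k` values of `l`. For those, `hZ` increases by
`M L - C`, whereas porosity (`P`) caps the increment of `hY` on average by `M L (1 - ε / 2)` up to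
boundary terms; for the other values of `l`, `hZ` increases at least as much as `hY` up to `2 L`. A
large `M` makes the gain exceed the bounded losses, and a large `k` absorbs the boundary terms. -/
lemma seq_lemma (L ε C : ℝ) (hL : 0 < L) (hε : 0 < ε) (hC : 0 ≤ C) (m s : ℕ) (hm : 0 < m)
    (hs : 0 < s) :
    ∃ M : ℕ, ∃ K : ℕ, ∀ k, K ≤ k → ∀ hX hY hZ P : ℕ → ℝ, Lip L hX → Lip L hY → Lip L hZ →
      hX k ≤ L → hY k ≤ L → ε * k * L < hX 0 → (∀ j, P j ≤ 1) →
      (1 - ε / 2) * (k + 1) < ∑ j ∈ Finset.range (k + 1), P j →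
      (∀ j, m ≤ j → j ≤ k → hY (j - m) - hY j ≤ m * L * (1 - ε / 2 * P j)) →
      (∀ j, hY j - hY (j + M) - 2 * L ≤ hZ j - hZ (j + M)) →
      (∀ l, s ≤ l → ε / 8 * s * L ≤ hX (l - s) - hX l → M * L - C ≤ hZ l - hZ (l + M)) →
      hY 0 + ε ^ 2 * L / 16 * k ≤ hZ 0 := by
  classical
  set C3 := (2 * L + C) + 7 / 8 * ε * (ε / 2 * m * L + 2 * m * L) with hC3
  have hmr : (0:ℝ) < m := by exact_mod_cast hm
  have hsr : (0:ℝ) < s := by exact_mod_cast hs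
  have hε2 : 0 < ε ^ 2 * L / 16 := by positivity
  obtain ⟨M1, hM1⟩ := exists_nat_ge (C3 / (ε ^ 2 * L / 16))
  obtain ⟨M2, hM2⟩ := exists_nat_ge ((2 * m * L + ε / 2 * L * m) / (ε / 2 * L))
  set M := M1 + M2 + m with hMdef
  have hMm : m ≤ M := by omega
  have hMr : (0:ℝ) < M := by exact_mod_cast (by omega : 0 < M)
  have hMa : C3 ≤ M * (ε ^ 2 * L / 16) := by
    rw [div_le_iff₀ hε2] at hM1
    refine hM1.trans (mul_le_mul_of_nonneg_right ?_ hε2.le)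
    exact_mod_cast (by omega : M1 ≤ M)
  have hMb : 0 ≤ ε / 2 * L * (M - m) - 2 * m * L := by
    rw [div_le_iff₀ (by positivity)] at hM2
    have : (M2:ℝ) * (ε / 2 * L) ≤ M * (ε / 2 * L) :=
      mul_le_mul_of_nonneg_right (by exact_mod_cast (by omega : M2 ≤ M)) (by positivity)
    linarith
  set K0 := M * (2 * M + 1) * L + (2 * L + C) + (2 * s + M + 1) * (ε / 2 * L * M) + ε ^ 2 / 4 * L * M
  obtain ⟨K1, hK1⟩ := exists_nat_ge (K0 / (M * (ε ^ 2 * L / 16)))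
  refine ⟨M, K1 + M + s, fun k hk hX hY hZ P LX LY LZ hXk hYk hX0 hP1 hP hpor hbad hgood => ?_⟩
  obtain ⟨n', rfl⟩ : ∃ n', k = n' + s + M := ⟨k - M - s, by omega⟩
  set k := n' + s + M with hkdef
  set n := n' + s + 1 with hn
  have tZ : ∑ l ∈ Finset.range n, (hZ l - hZ (l + M)) ≤ M * hZ 0 := by
    rw [tele]
    calc _ ≤ ∑ i ∈ Finset.range M, hZ 0 := by
          refine Finset.sum_le_sum fun i _ => ?_
          have := LZ.anti 0 i
          rw [zero_add] at this
          have := LZ.nonneg (i + n)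
          linarith
      _ = _ := by simp
  have tY : M * hY 0 - M * (2 * M + 1) * L ≤ ∑ l ∈ Finset.range n, (hY l - hY (l + M)) := by
    have h1 := tele_lower hL.le LY 0 n M (M - 1)
    simp only [zero_add] at h1
    rw [show n + (M - 1) = k by omega] at h1
    have h2 : ((M - 1 : ℕ) : ℝ) ≤ M := by exact_mod_cast (by omega : M - 1 ≤ M)
    have h3 : (M:ℝ) * (hY 0 - (2 * M + 1) * L) ≤ M * (hY 0 - hY k - (M + (M - 1 : ℕ)) * L) :=
      mul_le_mul_of_nonneg_left (by nlinarith) hMr.le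
    linarith
  -- A window that is not good contributes at most `ε s L / 8` to the telescoped drop of `hX`, and a
  -- good one at most `s L`; this bounds the number of good levels from below.
  set good := (Finset.range n).filter fun l => s ≤ l ∧ ε / 8 * s * L ≤ hX (l - s) - hX l with hgd
  have hcard : (7 / 8 * ε) * k - (2 * s + M + 1) ≤ (good.card : ℝ) := by
    have h1 := tele_lower hL.le LX 0 (n' + 1) s (s + M - 1)
    simp only [zero_add] at h1
    rw [show n' + 1 + (s + M - 1) = k by omega] at h1
    set good' := (Finset.range (n' + 1)).filter fun t => ε / 8 * s * L ≤ hX t - hX (t + s)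
    have hcc : good'.card ≤ good.card := by
      refine Finset.card_le_card_of_injOn (fun t => t + s) ?_ (fun a _ c _ h => by simpa using h)
      intro t ht
      have ht' := Finset.mem_filter.1 ht
      have := Finset.mem_range.1 ht'.1
      refine Finset.mem_filter.2 ⟨Finset.mem_range.2 (show t + s < n by omega), by simp, ?_⟩
      simpa using ht'.2
    have h2 : ∑ t ∈ Finset.range (n' + 1), (hX t - hX (t + s))
        ≤ good'.card * (s * L) + (n' + 1 : ℕ) * (ε / 8 * s * L) := by
      calc _ ≤ ∑ t ∈ Finset.range (n' + 1), ((if ε / 8 * s * L ≤ hX t - hX (t + s) then s * L else 0)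
              + ε / 8 * s * L) := by
            refine Finset.sum_le_sum fun t _ => ?_
            have := LX.lip t s
            split_ifs with h
            · have : 0 ≤ ε / 8 * s * L := by positivity
              linarith
            · linarith
        _ = _ := by
            rw [Finset.sum_add_distrib, ← Finset.sum_filter, Finset.sum_const, Finset.sum_const,
              Finset.card_range, nsmul_eq_mul, nsmul_eq_mul]
    have h3 : ((s + M - 1 : ℕ) : ℝ) ≤ s + M := by exact_mod_cast (by omega : s + M - 1 ≤ s + M)
    have h4 : ((n' + 1 : ℕ) : ℝ) ≤ k := by exact_mod_cast (by omega : n' + 1 ≤ k)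
    have h5 : (good'.card : ℝ) ≤ good.card := by exact_mod_cast hcc
    have h6 : (s:ℝ) * (ε * k * L - L - (2 * s + M) * L) ≤ s * (good.card * L + k * (ε / 8 * L)) := by
      calc _ ≤ (s:ℝ) * (hX 0 - hX k - (s + (s + M - 1 : ℕ)) * L) :=
            mul_le_mul_of_nonneg_left (by nlinarith) hsr.le
        _ ≤ _ := h1.trans h2
        _ ≤ good.card * (s * L) + k * (ε / 8 * s * L) := by gcongr
        _ = _ := by ring
    have h7 := le_of_mul_le_mul_left h6 hsr
    have h8 : (ε * k - 1 - (2 * s + M)) * L ≤ (good.card + k * (ε / 8)) * L := by linarith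
    have h9 := le_of_mul_le_mul_right h8 hL
    linarith
  -- `Q` measures the failure of porosity, of total mass at most `ε (k + 1) / 2`. Where it is small,
  -- the increment of `hY` over a block of length `M` falls short of `M L` by about `ε L M / 2`.
  set M' := M - m + 1 with hM'
  set Q : ℕ → ℝ := fun j => 1 - P j
  have hQ0 : ∀ j, 0 ≤ Q j := fun j => sub_nonneg.2 (hP1 j)
  have hQs : ∑ j ∈ Finset.range (k + 1), Q j ≤ ε / 2 * (k + 1) := by
    simp only [Q, Finset.sum_sub_distrib, Finset.sum_const, Finset.card_range, nsmul_eq_mul]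
    push_cast
    linarith
  have hM'r : (M':ℝ) = M - m + 1 := by rw [hM']; push_cast [hMm]; ring
  have hm1 : (1:ℝ) ≤ m := by exact_mod_cast hm
  have hwin : ∀ l ∈ Finset.range n, (ε / 2 * L * (M - m) - 2 * m * L)
      - ε / 2 * L * ∑ t ∈ Finset.range M', Q (l + m + t) ≤ M * L - (hY l - hY (l + M)) := by
    intro l hl
    have hl' := Finset.mem_range.1 hl
    have h1 := tele_lower hL.le LY l M' m (m - 1)
    rw [show M' + (m - 1) = M by omega] at h1
    have h2 : ∑ t ∈ Finset.range M', (hY (l + t) - hY (l + (t + m)))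
        ≤ ∑ t ∈ Finset.range M', (m * L * (1 - ε / 2) + m * (ε / 2 * L * Q (l + m + t))) := by
      refine Finset.sum_le_sum fun t ht => ?_
      have ht' := Finset.mem_range.1 ht
      have := hpor (l + m + t) (by omega) (by omega)
      rw [show l + m + t - m = l + t by omega, show l + m + t = l + (t + m) by ring] at this
      rw [show l + m + t = l + (t + m) by ring]
      simp only [Q]
      refine this.trans_eq (by ring)
    rw [Finset.sum_add_distrib, ← Finset.mul_sum, ← Finset.mul_sum, ← Finset.mul_sum,
      Finset.sum_const, Finset.card_range, nsmul_eq_mul, hM'r] at h2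
    set SQ := ∑ t ∈ Finset.range M', Q (l + m + t)
    have h3 : ((m - 1 : ℕ) : ℝ) = m - 1 := by push_cast [hm]; ring
    rw [h3] at h1
    have h4 : (m:ℝ) * (hY l - hY (l + M) - (m + (m - 1)) * L)
        ≤ m * ((M - m + 1) * L * (1 - ε / 2) + ε / 2 * L * SQ) := by
      refine h1.trans (h2.trans_eq (by ring))
    have h5 := le_of_mul_le_mul_left h4 hmr
    have h6 : 0 ≤ ε * L := by positivity
    have h7 : 0 ≤ m * L := by positivity
    linarith
  -- Each block loses at most `2 L + C`, and the good ones gain the shortfall of `hY`.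
  have hblock : ∀ l ∈ Finset.range n, (hY l - hY (l + M)) - (2 * L + C)
      + (if s ≤ l ∧ ε / 8 * s * L ≤ hX (l - s) - hX l then M * L - (hY l - hY (l + M)) else 0)
      ≤ hZ l - hZ (l + M) := by
    intro l _
    split_ifs with h
    · have := hgood l h.1 h.2
      linarith
    · have := hbad l
      linarith
  have hsum := Finset.sum_le_sum hblock
  rw [Finset.sum_add_distrib, Finset.sum_sub_distrib, ← Finset.sum_filter, Finset.sum_const,
    Finset.card_range, nsmul_eq_mul] at hsum
  have hgs : good.card * (ε / 2 * L * (M - m) - 2 * m * L) - ε / 2 * L * (M * (ε / 2 * (k + 1)))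
      ≤ ∑ l ∈ good, (M * L - (hY l - hY (l + M))) := by
    have h1 : ∑ l ∈ good, ∑ t ∈ Finset.range M', Q (l + m + t) ≤ M * (ε / 2 * (k + 1)) := by
      rw [Finset.sum_comm]
      calc _ ≤ ∑ t ∈ Finset.range M', (ε / 2 * (k + 1) : ℝ) := by
            refine Finset.sum_le_sum fun t ht => le_trans ?_ hQs
            have ht' := Finset.mem_range.1 ht
            rw [← Finset.sum_image (f := Q) (g := fun l => l + m + t)
              (fun a _ c _ h => by simpa using h)]
            refine Finset.sum_le_sum_of_subset_of_nonneg ?_ fun j _ _ => hQ0 j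
            intro j hj
            obtain ⟨l, hl, rfl⟩ := Finset.mem_image.1 hj
            have := Finset.mem_range.1 (Finset.mem_filter.1 hl).1
            exact Finset.mem_range.2 (by omega)
        _ = M' * (ε / 2 * (k + 1)) := by simp
        _ ≤ _ := by
            refine mul_le_mul_of_nonneg_right ?_ (by positivity)
            linarith
    calc _ ≤ good.card * (ε / 2 * L * (M - m) - 2 * m * L)
          - ε / 2 * L * ∑ l ∈ good, ∑ t ∈ Finset.range M', Q (l + m + t) := by gcongr
      _ = ∑ l ∈ good, ((ε / 2 * L * (M - m) - 2 * m * L)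
          - ε / 2 * L * ∑ t ∈ Finset.range M', Q (l + m + t)) := by
          rw [Finset.sum_sub_distrib, Finset.sum_const, nsmul_eq_mul, ← Finset.mul_sum]
      _ ≤ _ := Finset.sum_le_sum fun l hl => hwin l (Finset.mem_filter.1 hl).1
  have hcc := mul_le_mul_of_nonneg_right hcard hMb
  have hnk : (n:ℝ) ≤ k + 1 := by exact_mod_cast (by omega : n ≤ k + 1)
  have hnk' : (n:ℝ) * (2 * L + C) ≤ (k + 1) * (2 * L + C) := mul_le_mul_of_nonneg_right hnk (by positivity)
  have hK : K0 ≤ k * (M * (ε ^ 2 * L / 16)) := by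
    rw [div_le_iff₀ (by positivity)] at hK1
    refine hK1.trans (mul_le_mul_of_nonneg_right ?_ (by positivity))
    exact_mod_cast (by omega : K1 ≤ k)
  have hMk := mul_le_mul_of_nonneg_left hMa (Nat.cast_nonneg (α := ℝ) k)
  have hdrop : (2 * s + M + 1) * (ε / 2 * L * (M - m) - 2 * m * L)
      ≤ (2 * s + M + 1) * (ε / 2 * L * M) := by
    refine mul_le_mul_of_nonneg_left ?_ (by positivity)
    nlinarith [mul_pos hmr hL, mul_pos hε (mul_pos hmr hL)]
  have hfin : M * (hY 0 + ε ^ 2 * L / 16 * k) ≤ M * hZ 0 := by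
    have e1 : (2 * L + C) * k + 7 / 8 * ε * k * (ε / 2 * m * L + 2 * m * L) = k * C3 := by
      rw [hC3]; ring
    have e2 : 7 / 8 * ε * k * (ε / 2 * L * (M - m) - 2 * m * L)
        = 7 / 16 * ε ^ 2 * L * M * k - 7 / 8 * ε * k * (ε / 2 * m * L + 2 * m * L) := by ring
    have e3 : ε / 2 * L * (M * (ε / 2 * (k + 1))) = ε ^ 2 / 4 * L * M * k + ε ^ 2 / 4 * L * M := by ring
    have e4 : K0 = M * (2 * M + 1) * L + (2 * L + C) + (2 * s + M + 1) * (ε / 2 * L * M)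
      + ε ^ 2 / 4 * L * M := rfl
    linarith
  exact le_of_mul_le_mul_left hfin hMr

/-! ### Entropy growth for integer-valued variables -/

/-- The entropy profile of an integer-valued variable: every cell has `b` subcells. -/
lemma lip_Hd {A : Type*} [Fintype A] {p : A → ℝ} (hp : IsPW p) (X : A → ℤ) (b : ℕ) (hb : 2 ≤ b) :
    Lip (Real.log b) (fun j => Hd p (fun a => X a / (b:ℤ) ^ j)) := by
  have hb0 : (0:ℤ) < b := by exact_mod_cast (by omega : 0 < b)
  have hdet : ∀ j t a, X a / (b:ℤ) ^ (j + t) = X a / (b:ℤ) ^ j / (b:ℤ) ^ t := by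
    intro j t z
    rw [Int.ediv_ediv_of_nonneg (by positivity), pow_add]
  refine ⟨fun j => Hd_nonneg hp _, fun j t => Hd_mono hp fun a c h => ?_, fun j t => ?_⟩
  · rw [hdet, hdet, h]
  · have hcc := Hd_cond_card hp (fun a => X a / (b:ℤ) ^ j) (fun a => X a / (b:ℤ) ^ (j + t))
      (fun v => Finset.Ico (v * (b:ℤ) ^ t) (v * (b:ℤ) ^ t + (b ^ t : ℕ))) (b ^ t) (by positivity)
      (fun a => by
        rw [hdet]
        have h1 := Int.emod_add_mul_ediv (X a / (b:ℤ) ^ j) ((b:ℤ) ^ t)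
        have h2 := Int.emod_nonneg (X a / (b:ℤ) ^ j) (show (b:ℤ) ^ t ≠ 0 by positivity)
        have h3 := Int.emod_lt_of_pos (X a / (b:ℤ) ^ j) (show 0 < (b:ℤ) ^ t by positivity)
        rw [Finset.mem_Ico]
        push_cast
        constructor <;> linarith)
      (fun v => by rw [Int.card_Ico]; simp)
    have hm : Hd p (fun a => X a / (b:ℤ) ^ j)
        ≤ Hd p (fun a => (X a / (b:ℤ) ^ j, X a / (b:ℤ) ^ (j + t))) := by
      refine Hd_mono hp fun a a' => ?_
      simp only [Prod.mk.injEq]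
      tauto
    push_cast at hcc
    rw [Real.log_pow] at hcc
    exact hm.trans hcc

/-- Entropy growth for integer-valued variables on finite probability spaces. Levels are counted
from the finest scale `0` to the coarsest scale `k`, and `P j` stands for the probability of the
porous components at level `j`. The constant loses the factor `b ^ (2 * M)`, the
number of copies of `X` to which `Hd_iterate` is applied. -/
theorem discrete_growth (b : ℕ) (hb : 2 ≤ b) (ε : ℝ) (hε : 0 < ε) (m : ℕ) (hm : 0 < m) :
    ∃ δ : ℝ, 0 < δ ∧ ∃ K : ℕ, ∀ k, K ≤ k → ∀ (A B : Type) [Fintype A] [Fintype B]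
      (p : A → ℝ) (q : B → ℝ), IsPW p → IsPW q → ∀ (X : A → ℤ) (Y : B → ℤ) (P : ℕ → ℝ),
      Hd p (fun a => X a / (b:ℤ) ^ k) ≤ Real.log 2 → Hd q (fun y => Y y / (b:ℤ) ^ k) ≤ Real.log 2 →
      ε * k * Real.log b < Hd p X → (∀ j, P j ≤ 1) →
      (1 - ε / 2) * (k + 1) < ∑ j ∈ Finset.range (k + 1), P j →
      (∀ j, m ≤ j → j ≤ k → Hd q (fun y => Y y / (b:ℤ) ^ (j - m)) - Hd q (fun y => Y y / (b:ℤ) ^ j)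
        ≤ m * Real.log b * (1 - ε / 2 * P j)) →
      Hd q Y + δ * k ≤ Hd (fun z : B × A => q z.1 * p z.2) (fun z => Y z.1 + X z.2) := by
  have hL : 0 < Real.log b := Real.log_pos (by exact_mod_cast (by omega : 1 < b))
  have hL2 : Real.log 2 ≤ Real.log b := Real.log_le_log (by norm_num) (by exact_mod_cast hb)
  set L := Real.log b with hLd
  obtain ⟨s0, hs0⟩ := exists_nat_ge (Real.log 6 / (ε / 16 * L))
  set s := s0 + 1
  have h6 : Real.log 6 ≤ ε / 8 / 2 * s * L := by
    rw [div_le_iff₀ (by positivity)] at hs0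
    have : (s0:ℝ) * (ε / 16 * L) ≤ s * (ε / 16 * L) :=
      mul_le_mul_of_nonneg_right (by exact_mod_cast Nat.le_succ s0) (by positivity)
    linarith
  set C := |Real.log (b ^ s / Real.sqrt (ε / 8 / 8) + 16 / (ε / 8)) + 4 * Real.log 2|
  obtain ⟨M, K, hMK⟩ := seq_lemma L ε C hL hε (abs_nonneg _) m s hm (by omega)
  have hN : (0:ℝ) < (b ^ (2 * M) : ℕ) := by
    have : 0 < b ^ (2 * M) := by positivity
    exact_mod_cast this
  refine ⟨ε ^ 2 * L / 16 / (b ^ (2 * M) : ℕ), by positivity, K, ?_⟩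
  intro k hk A B _ _ p q hp hq X Y P hXk hYk hX0 hP1 hP hpor
  have hZ := hMK k hk _ _ _ P (lip_Hd hp X b hb) (lip_Hd hq Y b hb)
    (lip_Hd (hq.prod (hp.pw (b ^ (2 * M)))) (fun z => Y z.1 + ∑ j, X (z.2 j)) b hb)
    (hXk.trans hL2) (hYk.trans hL2) (by simpa using hX0) hP1 hP hpor
    (fun j => by
      have := bad_block hp hq X Y b hb (b ^ (2 * M)) M j
      linarith)
    (fun l hsl h => by
      have := good_block hp hq X Y b hb s M l (by omega) hsl (ε / 8) (by positivity) h6 h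
      refine le_trans (sub_le_sub_left (le_abs_self _) _) this)
  have hit := Hd_iterate hp hq X Y (b ^ (2 * M))
  simp only [pow_zero, Int.ediv_one] at hZ
  have h := hZ.trans hit
  have h' : ε ^ 2 * L / 16 * k ≤ (b ^ (2 * M) : ℕ) *
      (Hd (fun z : B × A => q z.1 * p z.2) (fun z => Y z.1 + X z.2) - Hd q Y) := by linarith
  have h2 : ε ^ 2 * L / 16 / (b ^ (2 * M) : ℕ) * k
      ≤ Hd (fun z : B × A => q z.1 * p z.2) (fun z => Y z.1 + X z.2) - Hd q Y := by
    rw [div_mul_eq_mul_div, div_le_iff₀ hN]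
    linarith
  linarith

/-! ### Cells of the real line and finite laws -/

/-- Under `μ`, the variable `F` takes almost surely its values in the finite family `val`, without
repetition, and takes the value `val t` with probability `w t`. -/
structure IsLaw {Ω β A : Type*} [MeasurableSpace Ω] [Fintype A] (μ : Measure Ω) (F : Ω → β)
    (val : A → β) (w : A → ℝ) : Prop where
  inj : Function.Injective val
  meas : ∀ t, MeasurableSet (F ⁻¹' {val t})
  ae : ∀ᵐ ω ∂μ, F ω ∈ range val
  eq : ∀ t, w t = μ.real (F ⁻¹' {val t})

section law
variable {Ω β A : Type*} [MeasurableSpace Ω] [Fintype A] {μ : Measure Ω} [IsProbabilityMeasure μ]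
  {F : Ω → β} {val : A → β} {w : A → ℝ}

open Classical in
lemma IsLaw.sum_mem (h : IsLaw μ F val w) (S : Set β) :
    ∑ t, (if val t ∈ S then w t else 0) = μ.real (F ⁻¹' S) := by
  rw [← Finset.sum_filter, Finset.sum_congr rfl fun t _ => h.eq t,
    ← measureReal_biUnion_finset (fun a _ c _ hac => ?_) (fun t _ => h.meas t)]
  · refine measureReal_congr ?_
    filter_upwards [h.ae] with ω hω
    obtain ⟨t, ht⟩ := hω
    refine propext ?_
    change ω ∈ ⋃ _, _ ↔ ω ∈ F ⁻¹' S
    simp only [mem_iUnion, mem_preimage, mem_singleton_iff, exists_prop, Finset.mem_filter,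
      Finset.mem_univ, true_and]
    constructor
    · rintro ⟨s, hs, hs'⟩
      rwa [hs']
    · intro hS
      exact ⟨t, by rwa [ht], ht.symm⟩
  · refine Disjoint.preimage _ (Set.disjoint_singleton.2 fun h' => hac (h.inj h'))

lemma IsLaw.isPW (h : IsLaw μ F val w) : IsPW w := by
  classical
  refine ⟨fun t => by rw [h.eq]; exact measureReal_nonneg, ?_⟩
  have := h.sum_mem univ
  simpa using this

/-- The entropy of an observable of a variable with a finite law, computed on the finite model. -/
lemma IsLaw.Hd {γ : Type*} (h : IsLaw μ F val w) (φ : β → γ) :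
    Skew.Hd w (fun t => φ (val t)) = ∑' u, Real.negMulLog (μ.real {ω | φ (F ω) = u}) := by
  classical
  have hpr : ∀ t, pr w (fun t => φ (val t)) t = μ.real {ω | φ (F ω) = φ (val t)} := by
    intro t
    have := h.sum_mem {v | φ v = φ (val t)}
    unfold pr
    exact (Finset.sum_congr rfl fun s _ => by congr).trans this
  rw [tsum_eq_sum (s := Finset.univ.image fun t => φ (val t))]
  · unfold Skew.Hd
    rw [← Finset.sum_fiberwise_of_maps_to (s := Finset.univ)
      (t := Finset.univ.image fun t => φ (val t)) (g := fun t => φ (val t))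
      (fun t _ => Finset.mem_image_of_mem _ (Finset.mem_univ t))]
    refine Finset.sum_congr rfl fun u _ => ?_
    have e : ∀ t ∈ Finset.univ.filter fun t => φ (val t) = u,
        w t * -Real.log (pr w (fun t => φ (val t)) t)
          = w t * -Real.log (μ.real {ω | φ (F ω) = u}) := by
      intro t ht
      rw [hpr, (Finset.mem_filter.1 ht).2]
    rw [Finset.sum_congr rfl e, ← Finset.sum_mul, Finset.sum_filter]
    have := h.sum_mem {v | φ v = u}
    have e2 : ∑ t, (if φ (val t) = u then w t else 0) = μ.real {ω | φ (F ω) = u} :=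
      (Finset.sum_congr rfl fun s _ => by congr).trans this
    rw [e2, Real.negMulLog]
    ring
  · intro u hu
    have : μ.real {ω | φ (F ω) = u} = 0 := by
      rw [measureReal_def, ENNReal.toReal_eq_zero_iff]
      left
      refine measure_eq_zero_iff_ae_notMem.2 ?_
      filter_upwards [h.ae] with ω hω hu'
      obtain ⟨t, ht⟩ := hω
      refine hu (Finset.mem_image.2 ⟨t, Finset.mem_univ _, ?_⟩)
      rw [ht]; exact hu'
    rw [this, Real.negMulLog_zero]

end law

/-- The index of the `b`-adic interval of level `i` containing `x`. -/
def flo (b i : ℕ) (x : ℝ) : ℤ := ⌊x * (b:ℝ) ^ i⌋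

section cells
variable {b : ℕ}

lemma badicI_eq (hb : 2 ≤ b) (i : ℕ) (j : ℤ) : badicI b i j = {x | flo b i x = j} := by
  have : (0:ℝ) < (b:ℝ) ^ i := by
    have : (0:ℝ) < b := by exact_mod_cast (by omega : 0 < b)
    positivity
  ext x
  simp only [badicI, flo, mem_Ico, mem_ofPred_eq, Int.floor_eq_iff, div_le_iff₀ this, lt_div_iff₀ this]

lemma entropy_mul_log (hb : 2 ≤ b) (μ : Measure ℝ) (i : ℕ) :
    entropy b μ i * Real.log b = ∑' j : ℤ, Real.negMulLog (μ.real {x | flo b i x = j}) := by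
  have hL : 0 < Real.log b := Real.log_pos (by exact_mod_cast (by omega : 1 < b))
  rw [entropy, div_mul_cancel₀ _ hL.ne']
  simp only [badicI_eq hb, measureReal_def]

lemma measurable_flo (b i : ℕ) : Measurable (flo b i) :=
  Int.measurable_floor.comp (measurable_id.mul_const _)

lemma flo_div (hb : 2 ≤ b) (i t : ℕ) (x : ℝ) : flo b i x = flo b (i + t) x / (b:ℤ) ^ t := by
  have hb0 : (b:ℝ) ≠ 0 := by exact_mod_cast (by omega : b ≠ 0)
  unfold flo
  rw [show ((b:ℤ)^t) = ((b^t : ℕ):ℤ) by push_cast; rfl, ← Int.floor_div_natCast]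
  congr 1
  push_cast
  rw [pow_add]
  field_simp

/-- A measure whose support has diameter at most `b⁻ⁿ` is carried by `b ^ k + 1` consecutive cells
of level `n + k`. -/
lemma ae_range (hb : 2 ≤ b) (μ : Measure ℝ) [IsProbabilityMeasure μ] (n k : ℕ)
    (h : EMetric.diam (msupport μ) ≤ ENNReal.ofReal (((b : ℝ) ^ n)⁻¹)) :
    ∃ a : ℤ, ∀ᵐ x ∂μ, flo b (n + k) x ∈ Finset.Icc a (a + b ^ k) := by
  have hb0 : (0:ℝ) < b := by exact_mod_cast (by omega : 0 < b)
  have hs : msupport μ = μ.support := by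
    ext x
    exact (Metric.nhds_basis_ball.mem_measureSupport (μ := μ) (x := x)).symm
  have hpw : ∀ x ∈ msupport μ, ∀ y ∈ msupport μ, x - y ≤ ((b : ℝ) ^ n)⁻¹ := by
    intro x hx y hy
    have h1 := (Metric.edist_le_ediam_of_mem hx hy).trans h
    rw [edist_dist, ENNReal.ofReal_le_ofReal_iff (by positivity), Real.dist_eq] at h1
    exact (le_abs_self _).trans h1
  have hne : (msupport μ).Nonempty := by
    rw [hs]
    exact Measure.nonempty_support (IsProbabilityMeasure.ne_zero μ)
  obtain ⟨x0, hx0⟩ := hne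
  have hbdd : BddBelow (msupport μ) := ⟨x0 - ((b : ℝ) ^ n)⁻¹, fun y hy => by
    have := hpw x0 hx0 y hy; linarith⟩
  set I := sInf (msupport μ)
  refine ⟨⌊I * (b:ℝ) ^ (n + k)⌋, ?_⟩
  have hae : ∀ᵐ x ∂μ, x ∈ msupport μ := by
    rw [hs]; exact Measure.support_mem_ae
  filter_upwards [hae] with x hx
  have h1 : I ≤ x := csInf_le hbdd hx
  have h2 : x ≤ I + ((b : ℝ) ^ n)⁻¹ := by
    have : x - ((b : ℝ) ^ n)⁻¹ ≤ I := le_csInf ⟨x0, hx0⟩ fun y hy => by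
      have := hpw x hx y hy; linarith
    linarith
  have hp : (0:ℝ) < (b:ℝ) ^ (n + k) := by positivity
  have h3 : x * (b:ℝ) ^ (n + k) ≤ I * (b:ℝ) ^ (n + k) + ((b ^ k : ℤ) : ℝ) := by
    calc _ ≤ (I + ((b : ℝ) ^ n)⁻¹) * (b:ℝ) ^ (n + k) := by gcongr
      _ = _ := by
        push_cast
        rw [pow_add]
        field_simp
  rw [Finset.mem_Icc]
  unfold flo
  refine ⟨Int.floor_le_floor (by gcongr), ?_⟩
  rw [← Int.floor_add_intCast]
  exact Int.floor_le_floor h3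

end cells

/-! ### Components and porosity -/

lemma law_flo {b : ℕ} (μ : Measure ℝ) (i : ℕ) (s : Finset ℤ)
    (h : ∀ᵐ x ∂μ, flo b i x ∈ s) :
    IsLaw μ (flo b i) (fun t : s => (t : ℤ)) (fun t => μ.real (flo b i ⁻¹' {(t : ℤ)})) where
  inj := Subtype.val_injective
  meas t := measurable_flo b i (MeasurableSet.singleton _)
  ae := by
    filter_upwards [h] with x hx
    exact ⟨⟨_, hx⟩, rfl⟩
  eq t := rfl

lemma IsLaw.entropy {b : ℕ} (hb : 2 ≤ b) {A : Type*} [Fintype A] {μ : Measure ℝ}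
    [IsProbabilityMeasure μ] {val : A → ℤ} {w : A → ℝ} {i t : ℕ}
    (h : IsLaw μ (flo b (i + t)) val w) :
    entropy b μ i * Real.log b = Skew.Hd w (fun a => val a / (b:ℤ) ^ t) := by
  rw [entropy_mul_log hb, h.Hd (fun v => v / (b:ℤ) ^ t)]
  simp only [← flo_div hb]

lemma IsLaw.entropy' {b : ℕ} (hb : 2 ≤ b) {A : Type*} [Fintype A] {μ : Measure ℝ}
    [IsProbabilityMeasure μ] {val : A → ℤ} {w : A → ℝ} {i : ℕ}
    (h : IsLaw μ (flo b i) val w) :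
    Skew.entropy b μ i * Real.log b = Skew.Hd w val := by
  rw [entropy_mul_log hb, ← h.Hd (fun v => v)]

/-- A variable on `b ^ k + 1` consecutive cells meets at most two cells `k` levels up. -/
lemma coarse_le {b : ℕ} (hb : 2 ≤ b) (k : ℕ) (a : ℤ)
    (p : Finset.Icc a (a + b ^ k) → ℝ) (hp : IsPW p) :
    Hd p (fun t => (t : ℤ) / (b:ℤ) ^ k) ≤ Real.log 2 := by
  have hpos : (0:ℤ) < (b:ℤ) ^ k := by
    have : (0:ℤ) < b := by exact_mod_cast (by omega : 0 < b)
    positivity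
  have := Hd_cond_card hp (fun t => (t : ℤ) / (b:ℤ) ^ k) (fun _ => ())
    (fun _ => {a / (b:ℤ) ^ k, a / (b:ℤ) ^ k + 1}) 2 (by norm_num) (fun t => by
      have ht := Finset.mem_Icc.1 t.2
      have h1 := Int.ediv_le_ediv hpos ht.1
      have h2 := Int.ediv_le_ediv hpos ht.2
      rw [Int.add_ediv_of_dvd_right dvd_rfl, Int.ediv_self hpos.ne'] at h2
      simp only [Finset.mem_insert, Finset.mem_singleton]
      omega) (fun _ => Finset.card_le_two)
  rw [Hd_const hp, zero_add] at this
  exact_mod_cast (Hd_mono hp (fun a c h => (Prod.mk.inj h).1)).trans this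

/-- The component of `μ` in a cell of positive mass has the law of `μ` conditioned on that cell. -/
lemma cell_law {b : ℕ} (hb : 2 ≤ b) {A : Type*} [Fintype A] {μ : Measure ℝ}
    [IsProbabilityMeasure μ] {val : A → ℤ} {w : A → ℝ} {i m : ℕ}
    (h : IsLaw μ (flo b (i + m)) val w) (l : ℤ) (hl : 0 < μ.real {x | flo b i x = l}) :
    IsProbabilityMeasure ((μ (badicI b i l))⁻¹ • μ.restrict (badicI b i l)) ∧
    IsLaw ((μ (badicI b i l))⁻¹ • μ.restrict (badicI b i l)) (flo b (i + m)) val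
      (fun t => if val t / (b:ℤ) ^ m = l then w t / μ.real {x | flo b i x = l} else 0) := by
  have hms : MeasurableSet {x | flo b i x = l} :=
    measurable_flo b i (MeasurableSet.singleton l)
  have hne : μ {x | flo b i x = l} ≠ 0 := fun h0 => by
    simp only [measureReal_def, h0, ENNReal.toReal_zero, lt_self_iff_false] at hl
  rw [badicI_eq hb]
  refine ⟨⟨?_⟩, h.inj, h.meas, ?_, fun t => ?_⟩
  · simp only [Measure.smul_apply, Measure.restrict_apply_univ, smul_eq_mul]
    exact ENNReal.inv_mul_cancel hne (measure_ne_top _ _)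
  · exact Measure.ae_smul_measure (ae_restrict_of_ae h.ae) _
  · simp only [measureReal_def, Measure.smul_apply, smul_eq_mul,
      Measure.restrict_apply (h.meas t), ENNReal.toReal_mul, ENNReal.toReal_inv]
    split_ifs with hc
    · have e : flo b (i + m) ⁻¹' {val t} ∩ {x | flo b i x = l}
          = flo b (i + m) ⁻¹' {val t} := by
        refine inter_eq_left.2 fun x hx => ?_
        have hx' : flo b (i + m) x = val t := hx
        change flo b i x = l
        rw [flo_div hb i m, hx', ← hc]
      rw [e, h.eq t, div_eq_inv_mul, measureReal_def]
    · have e : flo b (i + m) ⁻¹' {val t} ∩ {x | flo b i x = l} = ∅ := by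
        refine eq_empty_of_forall_notMem fun x hx => hc ?_
        have hx' : flo b (i + m) x = val t := hx.1
        have hx2 : flo b i x = l := hx.2
        rw [← hx2, flo_div hb i m, hx']
      rw [e, measure_empty, ENNReal.toReal_zero, mul_zero]

lemma pr_inj {Ω α : Type*} [Fintype Ω] (p : Ω → ℝ) (f : Ω → α) (hf : Function.Injective f)
    (t : Ω) : pr p f t = p t := by
  classical
  unfold pr
  rw [Finset.sum_eq_single t]
  · simp
  · intro s _ hs
    rw [if_neg fun e => hs (hf e)]
  · simp

/-- A law carried by one cell of relative size `b ^ m` has entropy at most `m log b`. -/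
lemma Hd_cell_le {b : ℕ} (hb : 2 ≤ b) {A : Type*} [Fintype A] {val : A → ℤ} {w : A → ℝ}
    (m : ℕ) (l : ℤ) (hw : IsPW w) (hl : ∀ t, 0 < w t → val t / (b:ℤ) ^ m = l) :
    Hd w val ≤ m * Real.log b := by
  have hb0 : 0 < b := by omega
  have hbm : (0:ℤ) < (b:ℤ) ^ m := by positivity
  have hC : (0:ℝ) < (b:ℝ) ^ m := by positivity
  have := Hd_cond_le hw val (fun _ => ()) (fun _ _ => ((b:ℝ) ^ m)⁻¹)
    (fun _ => Finset.Ico (l * (b:ℤ) ^ m) (l * (b:ℤ) ^ m + ((b ^ m : ℕ) : ℤ))) (fun t ht => by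
      rw [Finset.mem_Ico, ← hl t ht]
      have h1 := Int.ediv_mul_add_emod (val t) ((b:ℤ) ^ m)
      have h2 := Int.emod_nonneg (val t) hbm.ne'
      have h3 := Int.emod_lt_of_pos (val t) hbm
      push_cast
      constructor <;> linarith) (fun _ _ => by positivity) (fun _ _ => by positivity)
    (fun _ => by
      rw [Finset.sum_const, Int.card_Ico, add_sub_cancel_left, Int.toNat_natCast,
        nsmul_eq_mul]
      push_cast
      rw [mul_inv_cancel₀ hC.ne'])
  rw [Hd_const hw, sub_zero, ← Finset.sum_mul, hw.sum_one, one_mul, Real.log_inv, neg_neg,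
    Real.log_pow] at this
  exact (Hd_mono hw (fun a c h => (Prod.mk.inj h).1)).trans this

/-- The entropy increment of `μ` between levels `i` and `i + m` is the mean of the entropies of its
level-`i` components. Each is at most `m log b`, and at most `(1 - ε / 2) m log b` on the set where
the porosity condition holds. -/
lemma entropy_step {b : ℕ} (hb : 2 ≤ b) {A : Type*} [Fintype A] {μ : Measure ℝ}
    [IsProbabilityMeasure μ] {val : A → ℤ} {w : A → ℝ} {i m : ℕ} (hm : 0 < m) (ε : ℝ)
    (h : IsLaw μ (flo b (i + m)) val w) :
    entropy b μ (i + m) * Real.log b - entropy b μ i * Real.log b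
      ≤ m * Real.log b * (1 - ε / 2 *
        μ.real {x | (1 / m : ℝ) * entropy b (component b μ i x) (i + m) < 1 - ε + ε / 2}) := by
  classical
  have hL : 0 < Real.log b := Real.log_pos (by exact_mod_cast (by omega : 1 < b))
  have hm' : (0:ℝ) < m := by exact_mod_cast hm
  have hbm : (0:ℤ) < (b:ℤ) ^ m := by
    have : (0:ℤ) < b := by exact_mod_cast (by omega : 0 < b)
    positivity
  set W : ℤ → ℝ := fun l => μ.real {x | flo b i x = l} with hW
  set cell : A → ℤ := fun t => val t / (b:ℤ) ^ m with hcell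
  set ν : ℤ → Measure ℝ := fun l =>
    (μ (badicI b i l))⁻¹ • μ.restrict (badicI b i l) with hν
  set G : Set ℤ := {l | (1 / m : ℝ) * entropy b (ν l) (i + m) < 1 - ε + ε / 2} with hG
  have hPset : {x | (1 / m : ℝ) * entropy b (component b μ i x) (i + m) < 1 - ε + ε / 2}
      = flo b (i + m) ⁻¹' {v | v / (b:ℤ) ^ m ∈ G} := by
    ext x
    have hc : component b μ i x = ν (flo b i x) := by
      rw [hν, component, badicAt, flo]
    simp only [hG, mem_ofPred_eq, mem_preimage, ← flo_div hb, hc]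
  have hpw := h.isPW
  have hpr : ∀ t, pr w cell t = W (cell t) := by
    intro t
    have := h.sum_mem {v | v / (b:ℤ) ^ m = cell t}
    have e : flo b (i + m) ⁻¹' {v | v / (b:ℤ) ^ m = cell t} = {x | flo b i x = cell t} := by
      ext x
      change flo b (i + m) x / (b:ℤ) ^ m = cell t ↔ flo b i x = cell t
      rw [← flo_div hb]
    rw [e] at this
    exact (Finset.sum_congr rfl fun s _ => by congr).trans this
  have hsumW : ∀ l, ∑ t ∈ Finset.univ.filter (fun t => cell t = l), w t = W l := by
    intro l
    rw [Finset.sum_filter]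
    have := h.sum_mem {v | v / (b:ℤ) ^ m = l}
    have e : flo b (i + m) ⁻¹' {v | v / (b:ℤ) ^ m = l} = {x | flo b i x = l} := by
      ext x
      change flo b (i + m) x / (b:ℤ) ^ m = l ↔ flo b i x = l
      rw [← flo_div hb]
    rw [e] at this
    exact (Finset.sum_congr rfl fun s _ => by congr).trans this
  have key : ∀ l, 0 < W l →
      (∑ t ∈ Finset.univ.filter (fun t => cell t = l),
          w t * (Real.log (W l) - Real.log (w t))) = W l * (entropy b (ν l) (i + m) * Real.log b)
      ∧ entropy b (ν l) (i + m) * Real.log b ≤ m * Real.log b := by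
    intro l hl
    obtain ⟨hpν, hlaw⟩ := cell_law hb h l hl
    have hνl : ν l = (μ (badicI b i l))⁻¹ • μ.restrict (badicI b i l) := rfl
    have hpw' := hlaw.isPW
    rw [hνl, hlaw.entropy' hb]
    refine ⟨?_, Hd_cell_le hb m l hpw' fun t ht => ?_⟩
    · unfold Hd
      simp only [pr_inj _ val h.inj]
      rw [Finset.mul_sum, Finset.sum_filter]
      refine Finset.sum_congr rfl fun t _ => ?_
      change (if val t / (b:ℤ) ^ m = l then _ else _) = _
      split_ifs with hc
      · rcases (hpw.nonneg t).eq_or_lt with h0 | h0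
        · rw [← h0]; simp
        · rw [Real.log_div h0.ne' hl.ne']
          change _ = W l * (w t / W l * _)
          field_simp
          ring
      · simp
    · by_contra hc
      rw [if_neg hc] at ht
      exact ht.false
  have main : entropy b μ (i + m) * Real.log b - entropy b μ i * Real.log b
      ≤ ∑ t, w t * (m * Real.log b * (1 - ε / 2 * if cell t ∈ G then 1 else 0)) := by
    rw [h.entropy' hb, h.entropy hb]
    unfold Hd
    rw [← Finset.sum_sub_distrib]
    have e1 : ∀ t, w t * -Real.log (pr w val t) - w t * -Real.log (pr w cell t)
        = w t * (Real.log (W (cell t)) - Real.log (w t)) := by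
      intro t; rw [pr_inj w val h.inj, hpr]; ring
    rw [Finset.sum_congr rfl fun t _ => e1 t]
    rw [← Finset.sum_fiberwise_of_maps_to (s := Finset.univ)
      (t := Finset.univ.image cell) (g := cell)
      (fun t _ => Finset.mem_image_of_mem _ (Finset.mem_univ t)),
      ← Finset.sum_fiberwise_of_maps_to (s := Finset.univ)
      (t := Finset.univ.image cell) (g := cell)
      (fun t _ => Finset.mem_image_of_mem _ (Finset.mem_univ t))]
    refine Finset.sum_le_sum fun l _ => ?_
    have e2 : ∀ t ∈ Finset.univ.filter (fun t => cell t = l),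
        w t * (Real.log (W (cell t)) - Real.log (w t))
          = w t * (Real.log (W l) - Real.log (w t)) := by
      intro t ht; rw [(Finset.mem_filter.1 ht).2]
    have e3 : ∀ t ∈ Finset.univ.filter (fun t => cell t = l),
        w t * (m * Real.log b * (1 - ε / 2 * if cell t ∈ G then 1 else 0))
          = w t * (m * Real.log b * (1 - ε / 2 * if l ∈ G then 1 else 0)) := by
      intro t ht; rw [(Finset.mem_filter.1 ht).2]
    rw [Finset.sum_congr rfl e2, Finset.sum_congr rfl e3, ← Finset.sum_mul, hsumW]
    have hW0 : 0 ≤ W l := measureReal_nonneg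
    rcases hW0.eq_or_lt with h0 | h0
    · have hz : ∀ t ∈ Finset.univ.filter (fun t => cell t = l), w t = 0 := by
        intro t ht
        have := (Finset.sum_eq_zero_iff_of_nonneg fun t _ => hpw.nonneg t).1
          ((hsumW l).trans h0.symm)
        exact this t ht
      rw [Finset.sum_eq_zero fun t ht => by rw [hz t ht, zero_mul], ← h0, zero_mul]
    · obtain ⟨k1, k2⟩ := key l h0
      rw [k1]
      refine mul_le_mul_of_nonneg_left ?_ h0.le
      split_ifs with hg
      · have hg' : (1 / m : ℝ) * entropy b (ν l) (i + m) < 1 - ε + ε / 2 := hg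
        rw [one_div, inv_mul_lt_iff₀ hm'] at hg'
        nlinarith
      · linarith
  have hP : ∑ t, (if cell t ∈ G then w t else 0)
      = μ.real (flo b (i + m) ⁻¹' {v | v / (b:ℤ) ^ m ∈ G}) := by
    rw [← h.sum_mem]
    refine Finset.sum_congr rfl fun t _ => ?_
    have hiff : val t ∈ {v | v / (b:ℤ) ^ m ∈ G} ↔ cell t ∈ G := by rw [mem_ofPred_eq]
    by_cases hc : cell t ∈ G
    · rw [if_pos hc, if_pos (hiff.2 hc)]
    · have hc' : val t ∉ {v | v / (b:ℤ) ^ m ∈ G} := fun h' => hc (hiff.1 h')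
      rw [if_neg hc, if_neg hc']
  have e4 : ∀ t, w t * (m * Real.log b * (1 - ε / 2 * if cell t ∈ G then 1 else 0))
      = m * Real.log b * (w t - ε / 2 * if cell t ∈ G then w t else 0) := by
    intro t
    by_cases hc : cell t ∈ G
    · rw [if_pos hc, if_pos hc]; ring
    · rw [if_neg hc, if_neg hc]; ring
  rw [hPset, ← hP]
  refine main.trans (le_of_eq ?_)
  rw [Finset.sum_congr rfl fun t _ => e4 t, ← Finset.mul_sum, Finset.sum_sub_distrib,
    hpw.sum_one, ← Finset.mul_sum]

/-! ### Convolutions -/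

lemma flo_add (b D : ℕ) (u v : ℝ) :
    flo b D u + flo b D v ≤ flo b D (u + v) ∧ flo b D (u + v) ≤ flo b D u + flo b D v + 1 := by
  unfold flo
  rw [add_mul]
  have h1 := Int.le_floor_add (u * (b:ℝ) ^ D) (v * (b:ℝ) ^ D)
  have h2 := Int.le_floor_add_floor (u * (b:ℝ) ^ D) (v * (b:ℝ) ^ D)
  constructor <;> linarith

/-- The entropy of a convolution against that of the sum of the two cell indices: the cell index of
`u + v` exceeds the sum of those of `u` and `v` by `0` or `1`, which accounts for `log 2`. -/
lemma conv_le {b : ℕ} (hb : 2 ≤ b) (D : ℕ) (θ τ : Measure ℝ) [IsProbabilityMeasure θ]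
    [IsProbabilityMeasure τ] (s r : Finset ℤ) {p : s → ℝ} {q : r → ℝ}
    (hp : IsLaw θ (flo b D) (fun t : s => (t : ℤ)) p)
    (hq : IsLaw τ (flo b D) (fun t : r => (t : ℤ)) q) :
    Hd (fun z : r × s => q z.1 * p z.2) (fun z => (z.1 : ℤ) + (z.2 : ℤ))
      ≤ entropy b (mconv θ τ) D * Real.log b + Real.log 2 := by
  have hmf := measurable_flo b D
  have hθ : ∀ᵐ ω ∂θ.prod τ, flo b D ω.1 ∈ s := by
    refine Measure.quasiMeasurePreserving_fst.ae (p := fun x => flo b D x ∈ s) ?_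
    filter_upwards [hp.ae] with x hx
    obtain ⟨t, ht⟩ := hx
    exact ht ▸ t.2
  have hτ : ∀ᵐ ω ∂θ.prod τ, flo b D ω.2 ∈ r := by
    refine Measure.quasiMeasurePreserving_snd.ae (p := fun x => flo b D x ∈ r) ?_
    filter_upwards [hq.ae] with x hx
    obtain ⟨t, ht⟩ := hx
    exact ht ▸ t.2
  have law1 : IsLaw (θ.prod τ) (fun ω => (flo b D ω.2, flo b D ω.1))
      (fun z : r × s => ((z.1 : ℤ), (z.2 : ℤ))) (fun z => q z.1 * p z.2) := by
    refine ⟨fun x y h => ?_, fun t => ?_, ?_, fun t => ?_⟩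
    · have h' := Prod.mk.inj h
      exact Prod.ext (Subtype.ext h'.1) (Subtype.ext h'.2)
    · exact ((hmf.comp measurable_snd).prodMk (hmf.comp measurable_fst))
        (MeasurableSet.singleton _)
    · filter_upwards [hθ, hτ] with ω h1 h2
      exact ⟨(⟨_, h2⟩, ⟨_, h1⟩), rfl⟩
    · have e : (fun ω : ℝ × ℝ => (flo b D ω.2, flo b D ω.1)) ⁻¹' {((t.1 : ℤ), (t.2 : ℤ))}
          = (flo b D ⁻¹' {(t.2 : ℤ)}) ×ˢ (flo b D ⁻¹' {(t.1 : ℤ)}) := by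
        ext ω
        simp only [mem_preimage, mem_singleton_iff, Prod.mk.injEq, mem_prod]
        exact and_comm
      rw [e, measureReal_prod_prod, hp.eq, hq.eq, mul_comm]
  have law2 : IsLaw (θ.prod τ) (fun ω => (flo b D ω.2, flo b D ω.1, flo b D (ω.1 + ω.2)))
      (fun z : r × s × Fin 2 => ((z.1 : ℤ), (z.2.1 : ℤ), (z.1 : ℤ) + z.2.1 + (z.2.2 : ℕ)))
      (fun z => (θ.prod τ).real
        ((fun ω => (flo b D ω.2, flo b D ω.1, flo b D (ω.1 + ω.2))) ⁻¹'
          {((z.1 : ℤ), (z.2.1 : ℤ), (z.1 : ℤ) + z.2.1 + (z.2.2 : ℕ))})) := by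
    refine ⟨fun x y h => ?_, fun t => ?_, ?_, fun t => rfl⟩
    · simp only [Prod.mk.injEq] at h
      obtain ⟨h1, h2, h3⟩ := h
      refine Prod.ext (Subtype.ext h1) (Prod.ext (Subtype.ext h2) (Fin.ext ?_))
      omega
    · exact ((hmf.comp measurable_snd).prodMk ((hmf.comp measurable_fst).prodMk
        (hmf.comp (measurable_fst.add measurable_snd)))) (MeasurableSet.singleton _)
    · filter_upwards [hθ, hτ] with ω h1 h2
      obtain ⟨h3, h4⟩ := flo_add b D ω.1 ω.2
      refine ⟨(⟨_, h2⟩, ⟨_, h1⟩,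
        ⟨(flo b D (ω.1 + ω.2) - flo b D ω.1 - flo b D ω.2).toNat, by omega⟩), ?_⟩
      simp only [Prod.mk.injEq, true_and]
      omega
  set w2 : r × s × Fin 2 → ℝ := fun z => (θ.prod τ).real
        ((fun ω => (flo b D ω.2, flo b D ω.1, flo b D (ω.1 + ω.2))) ⁻¹'
          {((z.1 : ℤ), (z.2.1 : ℤ), (z.1 : ℤ) + z.2.1 + (z.2.2 : ℕ))}) with hw2
  have hpw2 := law2.isPW
  have e1 := law1.Hd (fun v => v.1 + v.2)
  have e2 := law2.Hd (fun v => v.1 + v.2.1)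
  have e3 := law2.Hd (fun v => v.2.2)
  have e4 : entropy b (mconv θ τ) D * Real.log b
      = ∑' u, Real.negMulLog ((θ.prod τ).real {ω | flo b D (ω.1 + ω.2) = u}) := by
    rw [entropy_mul_log hb]
    refine tsum_congr fun u => ?_
    have hadd : Measurable fun ω : ℝ × ℝ => ω.1 + ω.2 := measurable_fst.add measurable_snd
    have := map_measureReal_apply (μ := θ.prod τ) hadd (hmf (MeasurableSet.singleton u))
    exact congrArg _ this
  have h5 := Hd_cond_card hpw2 (fun z => (z.1 : ℤ) + z.2.1)
    (fun z => (z.1 : ℤ) + z.2.1 + (z.2.2 : ℕ)) (fun y => {y, y - 1}) 2 (by norm_num)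
    (fun z => by
      have := z.2.2.2
      simp only [Finset.mem_insert, Finset.mem_singleton]
      omega) (fun _ => Finset.card_le_two)
  have h6 := Hd_mono hpw2 (f := fun z => (z.1 : ℤ) + z.2.1)
    (g := fun z => ((z.1 : ℤ) + z.2.1, (z.1 : ℤ) + z.2.1 + (z.2.2 : ℕ)))
    (fun a c h => (Prod.mk.inj h).1)
  simp only at e1 e2 e3
  rw [e1, e4, ← e2, ← e3]
  exact_mod_cast h6.trans h5

lemma IsLaw.entropy_at {b : ℕ} (hb : 2 ≤ b) {A : Type*} [Fintype A] {μ : Measure ℝ}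
    [IsProbabilityMeasure μ] {val : A → ℤ} {w : A → ℝ} {N : ℕ}
    (h : IsLaw μ (flo b N) val w) (i t : ℕ) (hN : i + t = N) :
    Skew.entropy b μ i * Real.log b = Skew.Hd w (fun a => val a / (b:ℤ) ^ t) := by
  subst hN
  exact h.entropy hb

/-- **Hochman's criterion on entropy increase.** -/
theorem hochman_entropy_growth (b : ℕ) (hb : 2 ≤ b) :
    ∀ ε : ℝ, 0 < ε → ∀ m : ℕ, 0 < m → ∃ δ : ℝ, 0 < δ ∧ ∃ Kbd : ℕ,
      ∀ k : ℕ, Kbd ≤ k → ∀ n : ℕ, ∀ τ θ : Measure ℝ,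
        IsProbabilityMeasure τ → IsProbabilityMeasure θ →
        EMetric.diam (msupport τ) ≤ ENNReal.ofReal (((b : ℝ) ^ n)⁻¹) →
        EMetric.diam (msupport θ) ≤ ENNReal.ofReal (((b : ℝ) ^ n)⁻¹) →
        EntPorous b τ (1 - ε) (ε / 2) m n (n + k) →
        (1 / k : ℝ) * entropy b θ (n + k) > ε →
        (1 / k : ℝ) * entropy b (mconv θ τ) (n + k) ≥
          (1 / k : ℝ) * entropy b τ (n + k) + δ := by
  intro ε hε m hm
  have hL : 0 < Real.log b := Real.log_pos (by exact_mod_cast (by omega : 1 < b))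
  obtain ⟨δ, hδ, K, hK⟩ := discrete_growth b hb ε hε m hm
  refine ⟨δ / (2 * Real.log b), by positivity, max K (max 1 ⌈2 * Real.log 2 / δ⌉₊), ?_⟩
  intro k hk n τ θ hτ hθ dτ dθ hpor hent
  have hk1 : K ≤ k := (le_max_left _ _).trans hk
  have hk2 : 1 ≤ k := ((le_max_left _ _).trans (le_max_right _ _)).trans hk
  have hk3 : 2 * Real.log 2 / δ ≤ k := (Nat.le_ceil _).trans (by
    exact_mod_cast ((le_max_right _ _).trans (le_max_right _ _)).trans hk)
  have hk0 : (0:ℝ) < k := by exact_mod_cast hk2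
  obtain ⟨aθ, haθ⟩ := ae_range hb θ n k dθ
  obtain ⟨aτ, haτ⟩ := ae_range hb τ n k dτ
  have lθ := law_flo θ (n + k) _ haθ
  have lτ := law_flo τ (n + k) _ haτ
  have hconv := conv_le hb (n + k) θ τ _ _ lθ lτ
  set p : Finset.Icc aθ (aθ + b ^ k) → ℝ :=
    fun t => θ.real (flo b (n + k) ⁻¹' {(t : ℤ)})
  set q : Finset.Icc aτ (aτ + b ^ k) → ℝ :=
    fun t => τ.real (flo b (n + k) ⁻¹' {(t : ℤ)})
  set g : ℕ → ℝ := fun i =>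
    τ.real {x | (1 / m : ℝ) * entropy b (component b τ i x) (i + m) < 1 - ε + ε / 2} with hg
  have eθ := lθ.entropy' hb
  have eτ := lτ.entropy' hb
  have hgrow := hK k hk1 _ _ p q lθ.isPW lτ.isPW (fun t => (t : ℤ)) (fun t => (t : ℤ))
    (fun j => g (n + k - j)) (coarse_le hb k aθ p lθ.isPW) (coarse_le hb k aτ q lτ.isPW)
    (by
      rw [← eθ]
      have := hent
      rw [gt_iff_lt, one_div, lt_inv_mul_iff₀ hk0] at this
      nlinarith)
    (fun j => measureReal_le_one)
    (by
      have hs : ∑ j ∈ Finset.range (k + 1), g (n + k - j) = ∑ i ∈ Finset.Icc n (n + k), g i := by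
        refine Finset.sum_nbij' (fun j => n + k - j) (fun i => n + k - i) ?_ ?_ ?_ ?_ ?_
        · intro j hj
          simp only [Finset.mem_range, Finset.mem_Icc] at hj ⊢
          omega
        · intro i hi
          simp only [Finset.mem_range, Finset.mem_Icc] at hi ⊢
          omega
        · intro j hj
          simp only [Finset.mem_range] at hj
          omega
        · intro i hi
          simp only [Finset.mem_Icc] at hi
          omega
        · intro j _
          rfl
      rw [hs]
      have h1 : (1 / (((n + k : ℕ) : ℝ) - n + 1)) * ∑ i ∈ Finset.Icc n (n + k), g i > 1 - ε / 2 :=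
        hpor
      have h2 : ((n + k : ℕ) : ℝ) - n + 1 = k + 1 := by push_cast; ring
      rw [h2, gt_iff_lt, one_div, lt_inv_mul_iff₀ (by positivity)] at h1
      linarith)
    (by
      intro j hmj hjk
      rw [← lτ.entropy_at hb (n + k - j + m) (j - m) (by omega),
        ← lτ.entropy_at hb (n + k - j) j (by omega)]
      obtain ⟨a, ha⟩ := ae_range hb τ n (k - j + m) dτ
      have hlaw := law_flo τ (n + (k - j + m)) _ ha
      rw [show n + (k - j + m) = n + k - j + m by omega] at hlaw
      exact entropy_step hb hm ε hlaw)
  have hfin : entropy b τ (n + k) * Real.log b + δ * k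
      ≤ entropy b (mconv θ τ) (n + k) * Real.log b + Real.log 2 := by
    rw [eτ]
    exact hgrow.trans hconv
  rw [div_le_iff₀ hδ] at hk3
  rw [ge_iff_le, ← sub_nonneg]
  have h7 : 0 ≤ (entropy b (mconv θ τ) (n + k) - entropy b τ (n + k)) * Real.log b - δ / 2 * k := by
    linarith
  have h8 : (1 / k : ℝ) * entropy b (mconv θ τ) (n + k)
      - ((1 / k : ℝ) * entropy b τ (n + k) + δ / (2 * Real.log b))
      = ((entropy b (mconv θ τ) (n + k) - entropy b τ (n + k)) * Real.log b - δ / 2 * k)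
        / (k * Real.log b) := by
    field_simp
    ring
  rw [h8]
  positivity

end
end Skew
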